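/- arXiv:2507.20274 — 3 statements merged into one kernel-verified Lean document; each statement's English description precedes it below -/
import Mathlib

section
/- Flow parameter identities (Lemma 2.9): Fix κ ∈ (0,1). Let z ∈ ℂ with 0 < Im z ≤ 1 and |Re z| ≤ 2 − κ, set m = m(z), t₀ := |m|², and E := −2·Re(m)/|m|. Then: (i) t₀ = Im m / (Im m + Im z); (ii) |E| ≤ 2 and √t₀ · m(E) = m(z); (iii) E + (1 − t₀)·m(E) = √t₀ · z, i.e. z_{t₀}(E) = √t₀·z for the flow z_t(E) := E + (1−t)·m(E); and (iv) there exists a constant c_κ > 0, depending only on κ, such that t₀ ≥ c_κ and c_κ ≤ Im m(E) ≤ 1. -/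
/-- The Stieltjes transform of the semicircle law at a real energy `E` with `|E| ≤ 2`:
`m(E) := (−E + i√(4−E²))/2`, so that `|m(E)| = 1`. -/
noncomputable def mSC (E : ℝ) : ℂ :=
  (-(E : ℂ) + Complex.I * ((Real.sqrt (4 - E ^ 2) : ℝ) : ℂ)) / 2

set_option maxHeartbeats 1000000 in
/-- **Flow parameter identities (Lemma 2.9).**
Fix `κ ∈ (0,1)`.  For `z` in the upper half plane with `Im z ≤ 1` and `|Re z| ≤ 2 − κ`,
let `m = m(z)` be the unique solution of `m² + zm + 1 = 0` with `Im m > 0`, and set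
`t₀ := |m|²` and `E := −2 Re m / |m|`.  Then `t₀ = Im m/(Im m + Im z)`, `|E| ≤ 2`,
`√t₀ · m(E) = m(z)`, `z_{t₀}(E) = √t₀ · z`, and there is a constant `c_κ > 0`
depending only on `κ` with `t₀ ≥ c_κ` and `c_κ ≤ Im m(E) ≤ 1`. -/
theorem flow_parameter_identities (κ : ℝ) (hκ0 : 0 < κ) (hκ1 : κ < 1) :
    ∃ c : ℝ, 0 < c ∧
      ∀ z m : ℂ, 0 < z.im → z.im ≤ 1 → |z.re| ≤ 2 - κ →
        m ^ 2 + z * m + 1 = 0 → 0 < m.im →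
        ∀ t₀ E : ℝ, t₀ = ‖m‖ ^ 2 → E = -2 * m.re / ‖m‖ →
          t₀ = m.im / (m.im + z.im) ∧
          |E| ≤ 2 ∧
          ((Real.sqrt t₀ : ℝ) : ℂ) * mSC E = m ∧
          (E : ℂ) + (1 - (t₀ : ℂ)) * mSC E = ((Real.sqrt t₀ : ℝ) : ℂ) * z ∧
          c ≤ t₀ ∧ c ≤ (mSC E).im ∧ (mSC E).im ≤ 1 := by
  refine ⟨κ / 16, by positivity, ?_⟩
  intro z m hz0 hz1 hx hm hb t₀ E ht hE
  have hm0 : m ≠ 0 := by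
    rintro rfl
    simp at hb
  have hr : 0 < ‖m‖ := norm_pos_iff.mpr hm0
  have hr2 : ‖m‖ ^ 2 = m.re ^ 2 + m.im ^ 2 := by
    rw [Complex.sq_norm, Complex.normSq_apply]; ring
  have hre := congrArg Complex.re hm
  have him := congrArg Complex.im hm
  simp [pow_two] at hre him
  have hz3 : ‖z‖ ≤ 3 := by
    have h1 := Complex.norm_le_abs_re_add_abs_im z
    rw [abs_of_pos hz0] at h1
    linarith
  have hn : 1 ≤ ‖m‖ * (‖m‖ + 3) := by
    have h1 : m * (m + z) = -1 := by linear_combination hm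
    have h2 : ‖m‖ * ‖m + z‖ = 1 := by rw [← norm_mul, h1]; simp
    have h3 := norm_add_le m z
    nlinarith
  have hsq : Real.sqrt t₀ = ‖m‖ := by rw [ht]; exact Real.sqrt_sq hr.le
  rw [hsq]
  generalize hrr : ‖m‖ = r at *
  obtain ⟨a, b⟩ := m
  obtain ⟨x, y⟩ := z
  simp only at *
  have h1 : a * r ^ 2 + x * r ^ 2 + a = 0 := by
    rw [hr2]; linear_combination a * hre + b * him
  have h2 : b * r ^ 2 + y * r ^ 2 - b = 0 := by
    rw [hr2]; linear_combination a * him - b * hre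
  have hbr : b ≤ r := by nlinarith [sq_nonneg a]
  have hs : Real.sqrt (4 - E ^ 2) = 2 * (b / r) := by
    have : 4 - E ^ 2 = (2 * (b / r)) ^ 2 := by
      rw [hE]; field_simp; linear_combination 4 * hr2
    rw [this]; exact Real.sqrt_sq (by positivity)
  have hSr : (mSC E).re = a / r := by
    simp [mSC]; rw [hE]; ring
  have hSi : (mSC E).im = b / r := by
    simp [mSC]; rw [hs]; ring
  have hy : y * r ^ 2 = b * (1 - r ^ 2) := by linarith
  have hr1 : r ≤ 1 := by
    by_contra hcon
    push Not at hcon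
    nlinarith [mul_pos hz0 (pow_pos hr 2), mul_pos hb (by nlinarith : 0 < r ^ 2 - 1)]
  have hxa := abs_le.mp hx
  -- |a| / r ≤ 1 - κ/2
  have haabs : |a| ≤ r * (1 - κ / 2) := by
    have e : |a| * (1 + r ^ 2) = r ^ 2 * |x| := by
      have : a * (1 + r ^ 2) = -(r ^ 2 * x) := by linarith
      have h := congrArg abs this
      rwa [abs_mul, abs_neg, abs_mul, abs_of_pos (by positivity : 0 < 1 + r ^ 2),
        abs_of_pos (by positivity : 0 < r ^ 2)] at h
    have e2 : r ^ 2 * |x| ≤ r ^ 2 * (2 - κ) := by gcongr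
    have e3 : r ^ 2 * (2 - κ) ≤ r * (1 - κ / 2) * (1 + r ^ 2) := by
      have : 0 ≤ r * (1 - κ / 2) * (1 - r) ^ 2 := by
        have : 0 ≤ 1 - κ / 2 := by linarith
        positivity
      nlinarith
    have : |a| * (1 + r ^ 2) ≤ r * (1 - κ / 2) * (1 + r ^ 2) := by linarith
    exact le_of_mul_le_mul_right this (by positivity)
  have ha2 : a ^ 2 ≤ (r * (1 - κ / 2)) ^ 2 := by
    rw [← sq_abs]; gcongr
  have hbk : r * (κ / 2) ≤ b := by
    refine abs_le_of_sq_le_sq' ?_ hb.le |>.2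
    nlinarith [mul_pos (pow_pos hr 2) (mul_pos hκ0 (by linarith : 0 < 1 - κ / 2))]
  have hr4 : 1 / 4 ≤ r := by
    by_contra hcon
    push Not at hcon
    linarith [mul_le_mul_of_nonneg_left hr1 hr.le]
  have haE : |a| ≤ r := by linarith [mul_pos hr hκ0]
  refine ⟨?_, ?_, ?_, ?_, ?_, ?_, ?_⟩
  · rw [ht, eq_div_iff (by positivity)]; linarith
  · rw [hE, abs_div, abs_of_pos hr, div_le_iff₀ hr, abs_mul]
    norm_num
    exact haE
  · apply Complex.ext
    · simp [hSr]; field_simp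
    · simp [hSi]; field_simp
  · have e : (1 - (t₀ : ℂ)) = ((1 - t₀ : ℝ) : ℂ) := by push_cast; rfl
    rw [e]
    apply Complex.ext
    · rw [Complex.add_re, Complex.re_ofReal_mul, Complex.re_ofReal_mul, hSr, Complex.ofReal_re,
        ht, hE]
      field_simp
      linarith
    · rw [Complex.add_im, Complex.im_ofReal_mul, Complex.im_ofReal_mul, hSi, Complex.ofReal_im,
        ht]
      field_simp
      linarith
  · rw [ht]; linarith [mul_le_mul hr4 hr4 (by norm_num) hr.le, pow_two r]
  · rw [hSi, le_div_iff₀ hr]; linarith [mul_pos hr hκ0]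
  · rw [hSi, div_le_iff₀ hr]; linarith
end

section
/- Exponential decay of the propagator (Lemma 2.19, part 5, first bound): There exist constants c_d, C_d > 0, depending only on d and C₀, such that for every integer L ≥ 2, every t ∈ [0,1), every m ∈ ℂ with |m| = 1, every ξ ∈ {t, t·m², t·conj(m)²}, and every a ∈ ℤ_L^d: |Θ^(B)_ξ(0,a)| ≤ C_d · B_{t,|a|} · exp(−c_d·|a|/ℓ_t). -/
/-- Periodic L¹ distance on the discrete torus `(ZMod n)^d`. -/
def torusDist {n d : ℕ} (x y : Fin d → ZMod n) : ℕ :=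
  ∑ i, min (x i - y i).val (y i - x i).val

/-- The block-level variance matrix `S^(B)` on `ℤ_L^d`, with coupling constant `λ`:
`S^(B)_{ab} = (1+2dλ²)⁻¹ 1_{a=b} + λ²(1+2dλ²)⁻¹ 1_{a∼b}`. -/
noncomputable def SBmat (d L : ℕ) [NeZero L] (lam : ℝ) :
    Matrix (Fin d → ZMod L) (Fin d → ZMod L) ℂ :=
  Matrix.of fun a b =>
    if a = b then ((1 / (1 + 2 * d * lam ^ 2) : ℝ) : ℂ)
    else if torusDist a b = 1 then ((lam ^ 2 / (1 + 2 * d * lam ^ 2) : ℝ) : ℂ)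
    else 0

/-- The propagator `Θ^(B)_ξ := (I − ξ·S^(B))⁻¹`. -/
noncomputable def ThetaB (d L : ℕ) [NeZero L] (lam : ℝ) (ξ : ℂ) :
    Matrix (Fin d → ZMod L) (Fin d → ZMod L) ℂ :=
  ((1 : Matrix (Fin d → ZMod L) (Fin d → ZMod L) ℂ) - ξ • SBmat d L lam)⁻¹

/-- The diffusion length scale `ℓ_t := min((1−t)^{−1/2}, L)`. -/
noncomputable def ellT (L : ℕ) (t : ℝ) : ℝ := min ((1 - t) ^ (-(1 / 2 : ℝ))) (L : ℝ)

/-- The control parameter `B_{t,K} := (K+1)^{−(d−2)} + 1/(L^d(1−t))`. -/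
noncomputable def Bparam (d L : ℕ) (t K : ℝ) : ℝ :=
  ((K + 1) ^ (d - 2))⁻¹ + ((L : ℝ) ^ d * (1 - t))⁻¹


lemma dist_one_nbr {L d : ℕ} [NeZero L] (a b : Fin d → ZMod L) (h : torusDist a b = 1) :
    ∃ i, b = a + Pi.single i 1 ∨ b = a - Pi.single i 1 := by
  classical
  unfold torusDist at h
  obtain ⟨i, hi⟩ : ∃ i, min (a i - b i).val (b i - a i).val ≠ 0 := by
    by_contra hc
    push Not at hc
    simp [hc] at h
  have hs := Finset.add_sum_erase Finset.univ
    (fun i => min (a i - b i).val (b i - a i).val) (Finset.mem_univ i)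
  rw [h] at hs
  have h1 : min (a i - b i).val (b i - a i).val = 1 := by
    omega
  have h0 : ∀ j, j ≠ i → a j = b j := by
    intro j hj
    have hz : ∑ x ∈ Finset.univ.erase i, min (a x - b x).val (b x - a x).val = 0 := by
      omega
    rw [Finset.sum_eq_zero_iff] at hz
    have := hz j (Finset.mem_erase.2 ⟨hj, Finset.mem_univ j⟩)
    rcases min_choice (a j - b j).val (b j - a j).val with h' | h' <;> rw [h'] at this
    · exact sub_eq_zero.1 ((ZMod.val_eq_zero _).1 this)
    · exact (sub_eq_zero.1 ((ZMod.val_eq_zero _).1 this)).symm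
  have hval : ∀ x : ZMod L, x.val = 1 → x = 1 := by
    intro x hx
    have := ZMod.natCast_zmod_val x
    rw [hx] at this
    simpa using this.symm
  refine ⟨i, ?_⟩
  rcases min_choice (a i - b i).val (b i - a i).val with h' | h' <;> rw [h'] at h1
  · right
    have := hval _ h1
    funext j
    by_cases hj : j = i
    · subst hj; simp [← this]
    · simp [hj, h0 j hj]
  · left
    have := hval _ h1
    funext j
    by_cases hj : j = i
    · subst hj; simp [← this]
    · simp [hj, h0 j hj]

/-- real version of the entries -/
noncomputable def SR (d L : ℕ) [NeZero L] (lam : ℝ) (a b : Fin d → ZMod L) : ℝ :=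
  if a = b then (1 / (1 + 2 * d * lam ^ 2) : ℝ)
    else if torusDist a b = 1 then (lam ^ 2 / (1 + 2 * d * lam ^ 2) : ℝ)
    else 0

/-- sum over the `2d` neighbours minus `2d` times the value -/
noncomputable def lapl {d L : ℕ} (f : (Fin d → ZMod L) → ℝ) (a : Fin d → ZMod L) : ℝ :=
  ∑ i, (f (a + Pi.single i 1) + f (a - Pi.single i 1) - 2 * f a)

lemma SR_nonneg (d L : ℕ) [NeZero L] (lam : ℝ) (a b : Fin d → ZMod L) : 0 ≤ SR d L lam a b := by
  unfold SR; split_ifs <;> positivity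

lemma SBmat_eq (d L : ℕ) [NeZero L] (lam : ℝ) (a b : Fin d → ZMod L) :
    SBmat d L lam a b = (SR d L lam a b : ℂ) := by
  unfold SBmat SR
  simp only [Matrix.of_apply]
  split_ifs <;> simp

lemma torusDist_comm {L d : ℕ} (a b : Fin d → ZMod L) : torusDist a b = torusDist b a := by
  unfold torusDist
  exact Finset.sum_congr rfl fun i _ => min_comm _ _

lemma SR_symm (d L : ℕ) [NeZero L] (lam : ℝ) (a b : Fin d → ZMod L) :
    SR d L lam a b = SR d L lam b a := by
  unfold SR
  rw [torusDist_comm a b]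
  simp only [eq_comm]

lemma SR_sum_le (d L : ℕ) [NeZero L] (lam : ℝ) (f : (Fin d → ZMod L) → ℝ) (hf : ∀ a, 0 ≤ f a)
    (a : Fin d → ZMod L) :
    ∑ b, SR d L lam a b * f b ≤ f a + lam ^ 2 / (1 + 2 * d * lam ^ 2) * lapl f a := by
  classical
  set mu := lam ^ 2 / (1 + 2 * d * lam ^ 2) with hmu
  have hmu0 : 0 ≤ mu := by positivity
  have key : ∀ b, SR d L lam a b * f b ≤ (if b = a then (1 / (1 + 2 * d * lam ^ 2) : ℝ) * f b else 0)
      + ∑ i, ((if b = a + Pi.single i 1 then mu * f b else 0)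
        + (if b = a - Pi.single i 1 then mu * f b else 0)) := by
    intro b
    have hfb := hf b
    have hnn : ∀ i ∈ Finset.univ, 0 ≤ ((if b = a + Pi.single i 1 then mu * f b else 0)
        + (if b = a - Pi.single i 1 then mu * f b else 0)) := by
      intro i _
      have : 0 ≤ mu * f b := mul_nonneg hmu0 hfb
      apply add_nonneg <;> split_ifs <;> first | exact this | exact le_rfl
    have hs := Finset.sum_nonneg hnn
    unfold SR
    by_cases hab : a = b
    · rw [if_pos hab, if_pos hab.symm]; linarith
    · rw [if_neg hab, if_neg (Ne.symm hab)]
      by_cases h1 : torusDist a b = 1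
      · rw [if_pos h1]
        obtain ⟨i, hi⟩ := dist_one_nbr a b h1
        have := Finset.single_le_sum hnn (Finset.mem_univ i)
        refine le_trans ?_ (le_trans this (by linarith))
        have hm : 0 ≤ mu * f b := mul_nonneg hmu0 hfb
        rcases hi with hi | hi
        · rw [if_pos hi]
          have : 0 ≤ (if b = a - Pi.single i 1 then mu * f b else 0) := by
            split_ifs <;> first | exact hm | exact le_rfl
          linarith
        · rw [if_pos hi]
          have : 0 ≤ (if b = a + Pi.single i 1 then mu * f b else 0) := by
            split_ifs <;> first | exact hm | exact le_rfl
          linarith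
      · rw [if_neg h1]; linarith
  refine (Finset.sum_le_sum fun b _ => key b).trans (le_of_eq ?_)
  rw [Finset.sum_add_distrib, Finset.sum_comm]
  simp only [Finset.sum_add_distrib, Finset.sum_ite_eq', Finset.mem_univ, if_true]
  unfold lapl
  have hpos : (1 + 2 * (d:ℝ) * lam ^ 2) ≠ 0 := by positivity
  simp only [Finset.sum_sub_distrib, Finset.sum_add_distrib, Finset.sum_const, Finset.card_univ,
    Fintype.card_fin, nsmul_eq_mul, ← Finset.mul_sum]
  rw [hmu]; field_simp; ring

lemma SR_row (d L : ℕ) [NeZero L] (lam : ℝ) (a : Fin d → ZMod L) :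
    ∑ b, SR d L lam a b ≤ 1 := by
  have := SR_sum_le d L lam (fun _ => 1) (fun _ => zero_le_one) a
  simpa [lapl, show (1:ℝ) + 1 - 2 = 0 by norm_num] using this

lemma theta_le (d L : ℕ) [NeZero L] (lam t : ℝ) (ht0 : 0 ≤ t) (ht1 : t < 1) (ξ : ℂ) (hξ : ‖ξ‖ ≤ t)
    (f : (Fin d → ZMod L) → ℝ) (hf : ∀ a, 0 ≤ f a)
    (hsup : ∀ a, (if a = 0 then (1:ℝ) else 0) ≤ f a - t * ∑ b, SR d L lam a b * f b)
    (a : Fin d → ZMod L) : ‖ThetaB d L lam ξ 0 a‖ ≤ f a := by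
  classical
  set A := (1 : Matrix (Fin d → ZMod L) (Fin d → ZMod L) ℂ) - ξ • SBmat d L lam with hA
  by_cases hu : IsUnit A.det
  · have hinv : ThetaB d L lam ξ * A = 1 := Matrix.nonsing_inv_mul A hu
    set v := fun a => ThetaB d L lam ξ 0 a with hv
    have hve : ∀ a, v a = (if a = 0 then 1 else 0) + ξ * ∑ b, (SR d L lam a b : ℂ) * v b := by
      intro a
      have h1 := congrFun (congrFun hinv 0) a
      rw [hA, Matrix.mul_sub, Matrix.mul_one, Matrix.mul_smul, Matrix.sub_apply, Matrix.smul_apply,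
        Matrix.mul_apply, Matrix.one_apply, smul_eq_mul] at h1
      have h2 : ∑ j, ThetaB d L lam ξ 0 j * SBmat d L lam j a = ∑ b, (SR d L lam a b : ℂ) * v b := by
        refine Finset.sum_congr rfl fun b _ => ?_
        rw [SBmat_eq, SR_symm, mul_comm]
      rw [h2] at h1
      have h3 : v a = ThetaB d L lam ξ 0 a := rfl
      rw [h3, ← sub_eq_iff_eq_add, h1]
      simp only [eq_comm]
    have hvn : ∀ a, ‖v a‖ ≤ (if a = 0 then (1:ℝ) else 0) + t * ∑ b, SR d L lam a b * ‖v b‖ := by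
      intro a
      rw [hve a]
      refine (norm_add_le _ _).trans (add_le_add ?_ ?_)
      · split_ifs <;> simp
      · rw [norm_mul]
        refine mul_le_mul hξ ?_ (norm_nonneg _) ht0
        refine (norm_sum_le _ _).trans (Finset.sum_le_sum fun b _ => ?_)
        rw [norm_mul, Complex.norm_real, Real.norm_of_nonneg (SR_nonneg _ _ _ _ _)]
    obtain ⟨a0, -, ha0⟩ := Finset.exists_max_image Finset.univ (fun a => ‖v a‖ - f a)
      ⟨0, Finset.mem_univ _⟩
    have hle : ‖v a0‖ - f a0 ≤ 0 := by
      by_contra hc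
      push Not at hc
      have h1 := hvn a0
      have h2 := hsup a0
      have h3 : ∑ b, SR d L lam a0 b * ‖v b‖ - ∑ b, SR d L lam a0 b * f b
          ≤ ‖v a0‖ - f a0 := by
        rw [← Finset.sum_sub_distrib]
        calc ∑ b, (SR d L lam a0 b * ‖v b‖ - SR d L lam a0 b * f b)
            ≤ ∑ b, SR d L lam a0 b * (‖v a0‖ - f a0) := by
              refine Finset.sum_le_sum fun b _ => ?_
              rw [← mul_sub]
              exact mul_le_mul_of_nonneg_left (ha0 b (Finset.mem_univ _)) (SR_nonneg _ _ _ _ _)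
          _ = (∑ b, SR d L lam a0 b) * (‖v a0‖ - f a0) := by rw [Finset.sum_mul]
          _ ≤ 1 * (‖v a0‖ - f a0) := mul_le_mul_of_nonneg_right (SR_row _ _ _ _) hc.le
          _ = _ := one_mul _
      nlinarith [mul_le_mul_of_nonneg_left h3 ht0]
    have := ha0 a (Finset.mem_univ _)
    have h3 : v a = ThetaB d L lam ξ 0 a := rfl
    rw [← h3]; linarith
  · have : ThetaB d L lam ξ = 0 := Matrix.nonsing_inv_apply_not_isUnit _ hu
    rw [this]; simpa using hf a

noncomputable def dlt (L : ℕ) : ℝ := 1 - Real.cos (2 * Real.pi / L)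

noncomputable def wf {L : ℕ} (x : ZMod L) : ℝ :=
  (1 - Real.cos (2 * Real.pi * (x.val : ℝ) / L)) / dlt L

lemma dlt_eq (L : ℕ) : dlt L = 2 * Real.sin (Real.pi / L) ^ 2 := by
  unfold dlt
  rw [show 2 * Real.pi / L = 2 * (Real.pi / L) by ring, Real.cos_two_mul, Real.cos_sq']; ring

lemma dlt_pos {L : ℕ} (hL : 2 ≤ L) : 0 < dlt L := by
  rw [dlt_eq]
  have hL' : (2:ℝ) ≤ L := by exact_mod_cast hL
  have : 0 < Real.sin (Real.pi / L) := by
    apply Real.sin_pos_of_pos_of_lt_pi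
    · have := Real.pi_pos; positivity
    · rw [div_lt_iff₀ (by linarith)]; nlinarith [Real.pi_pos]
  positivity

lemma dlt_le_two (L : ℕ) : dlt L ≤ 2 := by
  unfold dlt; linarith [Real.neg_one_le_cos (2 * Real.pi / L)]

lemma dlt_le {L : ℕ} (hL : 2 ≤ L) : dlt L ≤ 20 / (L:ℝ) ^ 2 := by
  rw [dlt_eq]
  have hL' : (2:ℝ) ≤ L := by exact_mod_cast hL
  have hp := Real.pi_pos
  have h0 : 0 ≤ Real.sin (Real.pi / L) := by
    apply Real.sin_nonneg_of_nonneg_of_le_pi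
    · positivity
    · rw [div_le_iff₀ (by linarith)]; nlinarith [Real.pi_pos]
  have h1 : Real.sin (Real.pi / L) ≤ Real.pi / L := Real.sin_le (by positivity)
  have h2 : Real.sin (Real.pi / L) ^ 2 ≤ (Real.pi / L) ^ 2 := pow_le_pow_left₀ h0 h1 2
  have h3 : Real.pi ^ 2 ≤ 10 := by nlinarith [Real.pi_lt_d2]
  calc 2 * Real.sin (Real.pi / L) ^ 2 ≤ 2 * (Real.pi / L) ^ 2 := by linarith
    _ = (2 * Real.pi ^ 2) / (L:ℝ) ^ 2 := by rw [div_pow]; ring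
    _ ≤ _ := by gcongr; linarith

lemma cos_int {L : ℕ} [NeZero L] (n : ℤ) :
    Real.cos (2 * Real.pi * (((n : ZMod L)).val : ℝ) / L) = Real.cos (2 * Real.pi * (n:ℝ) / L) := by
  have h : (((n : ZMod L)).val : ℤ) = n % L := ZMod.val_intCast n
  have h2 : (((n : ZMod L)).val : ℝ) = (n:ℝ) - L * ((n / L : ℤ) : ℝ) := by
    have h3 : (((n : ZMod L)).val : ℤ) = n - L * (n / L) := by
      rw [h, Int.emod_def]
    exact_mod_cast congrArg (Int.cast : ℤ → ℝ) h3
  have hL : (L:ℝ) ≠ 0 := by exact_mod_cast NeZero.ne L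
  rw [h2, show 2 * Real.pi * ((n:ℝ) - L * ((n / L : ℤ) : ℝ)) / L
    = 2 * Real.pi * (n:ℝ) / L - ((n / L : ℤ) : ℝ) * (2 * Real.pi) by field_simp]
  exact Real.cos_sub_int_mul_two_pi _ _

lemma wf_int {L : ℕ} [NeZero L] (n : ℤ) :
    wf (n : ZMod L) = (1 - Real.cos (2 * Real.pi * (n:ℝ) / L)) / dlt L := by
  unfold wf; rw [cos_int]

lemma wf_zero {L : ℕ} [NeZero L] : wf (0 : ZMod L) = 0 := by
  simp [wf]

lemma wf_nonneg {L : ℕ} (hL : 2 ≤ L) (x : ZMod L) : 0 ≤ wf x := by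
  unfold wf
  exact div_nonneg (by linarith [Real.cos_le_one (2 * Real.pi * (x.val : ℝ) / L)]) (dlt_pos hL).le

lemma dlt_wf_le {L : ℕ} (hL : 2 ≤ L) (x : ZMod L) : dlt L * wf x ≤ 2 := by
  unfold wf
  rw [mul_div_cancel₀ _ (dlt_pos hL).ne']
  linarith [Real.neg_one_le_cos (2 * Real.pi * (x.val : ℝ) / L)]

/-- The algebraic facts on increments. -/
structure Inc (δ w u v : ℝ) : Prop where
  w0 : 0 ≤ w
  dw : δ * w ≤ 2
  s1 : u + v = 2 - 2 * (δ * w)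
  s2 : u ^ 2 + v ^ 2 ≤ 2 + 8 * w
  s3 : -(2 * δ * w * (1 + 12 * w)) ≤ u ^ 3 + v ^ 3

lemma inc_wf {L : ℕ} [NeZero L] (hL : 2 ≤ L) (x : ZMod L) :
    Inc (dlt L) (wf x) (wf (x + 1) - wf x) (wf (x - 1) - wf x) := by
  have hx : x = ((x.val : ℤ) : ZMod L) := by simp
  have hw0 := wf_nonneg hL x
  have hdw := dlt_wf_le hL x
  have hp : wf (x + 1) = (1 - Real.cos (2 * Real.pi * (x.val:ℝ) / L + 2 * Real.pi / L)) / dlt L := by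
    have : x + 1 = (((x.val : ℤ) + 1 : ℤ) : ZMod L) := by push_cast; simp
    rw [this, wf_int]; push_cast; congr 3; ring
  have hm : wf (x - 1) = (1 - Real.cos (2 * Real.pi * (x.val:ℝ) / L - 2 * Real.pi / L)) / dlt L := by
    have : x - 1 = (((x.val : ℤ) - 1 : ℤ) : ZMod L) := by push_cast; simp
    rw [this, wf_int]; push_cast; congr 3; ring
  have hδ := dlt_pos hL
  have hδ2 := dlt_le_two L
  rw [Real.cos_add] at hp
  rw [Real.cos_sub] at hm
  have hC : Real.cos (2 * Real.pi / L) = 1 - dlt L := by unfold dlt; ring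
  have hc : Real.cos (2 * Real.pi * (x.val:ℝ) / L) = 1 - dlt L * wf x := by
    unfold wf; rw [mul_div_cancel₀ _ hδ.ne']; ring
  have hS := Real.sin_sq_add_cos_sq (2 * Real.pi / L)
  have hs := Real.sin_sq_add_cos_sq (2 * Real.pi * (x.val:ℝ) / L)
  rw [hC] at hp hm hS
  rw [hc] at hp hm hs
  set S := Real.sin (2 * Real.pi / L)
  set s := Real.sin (2 * Real.pi * (x.val:ℝ) / L)
  set δ := dlt L
  set w := wf x
  -- r := s S / δ
  obtain ⟨r, hr⟩ : ∃ r, r = s * S / δ := ⟨_, rfl⟩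
  have hr2 : r ^ 2 = w * (2 - δ * w) * (2 - δ) := by
    have h1 : s ^ 2 = δ * w * (2 - δ * w) := by linarith
    have h2 : S ^ 2 = δ * (2 - δ) := by linarith
    rw [hr, div_pow, mul_pow, h1, h2]; field_simp
  have hu : wf (x + 1) - w = (1 - δ * w) + r := by
    rw [hp, hr]; field_simp; ring
  have hv : wf (x - 1) - w = (1 - δ * w) - r := by
    rw [hm, hr]; field_simp; ring
  rw [hu, hv]
  have hdw0 : 0 ≤ δ * w := by positivity
  have hr4 : r ^ 2 ≤ 4 * w := by
    rw [hr2]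
    have : (2 - δ * w) * (2 - δ) ≤ 2 * 2 := by
      apply mul_le_mul <;> linarith
    nlinarith
  refine ⟨hw0, hdw, by ring, ?_, ?_⟩
  · nlinarith
  · have e : (1 - δ * w + r) ^ 3 + (1 - δ * w - r) ^ 3
        = 2 * (1 - δ * w) * ((1 - δ * w) ^ 2 + 3 * r ^ 2) := by ring
    rw [e]
    have hz0 : 0 ≤ (1 - δ * w) ^ 2 + 3 * r ^ 2 := by positivity
    have hz1 : (1 - δ * w) ^ 2 + 3 * r ^ 2 ≤ 1 + 12 * w := by nlinarith
    nlinarith [mul_le_mul_of_nonneg_left hz1 hdw0]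

lemma wf_ge {L : ℕ} [NeZero L] (hL : 2 ≤ L) (x : ZMod L) :
    ((min (0 - x).val (x - 0).val : ℕ) : ℝ) ^ 2 ≤ 3 * wf x := by
  have hLr : (2:ℝ) ≤ L := by exact_mod_cast hL
  have hp := Real.pi_pos
  obtain ⟨m, hm, hml, hmc⟩ : ∃ m : ℕ, min (0 - x).val (x - 0).val = m ∧ 2 * m ≤ L ∧
      Real.cos (2 * Real.pi * (x.val : ℝ) / L) = Real.cos (2 * Real.pi * (m:ℝ) / L) := by
    by_cases hx : x = 0
    · subst hx; exact ⟨0, by simp, by omega, by simp⟩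
    · have hv : (0 - x).val = L - x.val := by
        rw [zero_sub, ZMod.neg_val, if_neg hx]
      have hlt := ZMod.val_lt x
      rw [hv, sub_zero]
      rcases le_total x.val (L - x.val) with h | h
      · exact ⟨x.val, min_eq_right h, by omega, rfl⟩
      · refine ⟨L - x.val, min_eq_left h, by omega, ?_⟩
        rw [Nat.cast_sub hlt.le, ← Real.cos_neg,
          ← Real.cos_add_two_pi]
        congr 1; field_simp; ring
  rw [hm]
  have hw : wf x = (Real.sin (Real.pi * m / L) / Real.sin (Real.pi / L)) ^ 2 := by
    unfold wf
    rw [hmc, dlt_eq, show 2 * Real.pi * (m:ℝ) / L = 2 * (Real.pi * m / L) by ring,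
      Real.cos_two_mul, Real.cos_sq', div_pow]
    rw [show 1 - (2 * (1 - Real.sin (Real.pi * m / L) ^ 2) - 1) = 2 * Real.sin (Real.pi * m / L) ^ 2 by ring]
    rw [mul_div_mul_left _ _ (by norm_num)]
  have hmr : 2 * (m:ℝ) ≤ L := by exact_mod_cast hml
  have h1 : 2 / Real.pi * (Real.pi * m / L) ≤ Real.sin (Real.pi * m / L) := by
    apply Real.mul_le_sin (by positivity)
    rw [div_le_div_iff₀ (by linarith) (by norm_num)]; nlinarith
  have h1' : 2 * m / L ≤ Real.sin (Real.pi * m / L) := by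
    refine le_trans (le_of_eq ?_) h1; field_simp
  have hs0 : 0 < Real.sin (Real.pi / L) := by
    apply Real.sin_pos_of_pos_of_lt_pi
    · positivity
    · rw [div_lt_iff₀ (by linarith)]; nlinarith [Real.pi_pos]
  have hs1 : Real.sin (Real.pi / L) ≤ Real.pi / L := Real.sin_le (by positivity)
  have h2 : 2 * m / Real.pi ≤ Real.sin (Real.pi * m / L) / Real.sin (Real.pi / L) := by
    calc 2 * m / Real.pi = (2 * m / L) / (Real.pi / L) := by field_simp
      _ ≤ _ := div_le_div₀ (le_trans (by positivity) h1') h1' hs0 hs1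
  rw [hw]
  have h3 : (2 * m / Real.pi) ^ 2 ≤ (Real.sin (Real.pi * m / L) / Real.sin (Real.pi / L)) ^ 2 :=
    pow_le_pow_left₀ (by positivity) h2 2
  have h4 : (m:ℝ) ^ 2 ≤ 3 * (2 * m / Real.pi) ^ 2 := by
    rw [div_pow, mul_div_assoc', le_div_iff₀ (by positivity)]
    have : Real.pi ^ 2 ≤ 12 := by nlinarith [Real.pi_lt_d2]
    nlinarith [sq_nonneg (m:ℝ)]
  linarith

lemma mvt_step (g g' : ℝ → ℝ) (K : ℝ) (hK : 0 ≤ K) (n : ℕ)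
    (hg : ∀ v, |v| ≤ 1/2 → HasDerivAt g (g' v) v) (h0 : g 0 = 0)
    (hb : ∀ v, |v| ≤ 1/2 → |g' v| ≤ K * |v| ^ n) :
    ∀ v, |v| ≤ 1/2 → |g v| ≤ K * |v| ^ (n+1) := by
  intro v hv
  have hs : ∀ x ∈ Set.Icc (-|v|) |v|, |x| ≤ |v| := fun x hx => abs_le.2 hx
  have := Convex.norm_image_sub_le_of_norm_hasDerivWithin_le (f := g) (f' := g')
    (s := Set.Icc (-|v|) |v|) (C := K * |v| ^ n) (x := 0) (y := v)
    (fun x hx => (hg x ((hs x hx).trans hv)).hasDerivWithinAt)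
    (fun x hx => (hb x ((hs x hx).trans hv)).trans
      (mul_le_mul_of_nonneg_left (pow_le_pow_left₀ (abs_nonneg _) (hs x hx) n) hK))
    (convex_Icc _ _) (by simp) ⟨neg_abs_le v, le_abs_self v⟩
  rw [h0, sub_zero, sub_zero, Real.norm_eq_abs, Real.norm_eq_abs] at this
  rw [pow_succ, ← mul_assoc]; exact this

lemma one_add_pos {v : ℝ} (hv : |v| ≤ 1/2) : 1/2 ≤ 1 + v := by
  have := (abs_le.1 hv).1; linarith

lemma hd_pow (γ v : ℝ) (hv : |v| ≤ 1/2) :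
    HasDerivAt (fun v : ℝ => (1 + v) ^ (-γ)) (-γ * (1 + v) ^ (-(γ+1))) v := by
  have h := one_add_pos hv
  have h1 : HasDerivAt (fun v : ℝ => 1 + v) 1 v := (hasDerivAt_id v).const_add 1
  have := h1.rpow_const (p := -γ) (Or.inl (by linarith))
  convert this using 1
  rw [show -(γ+1) = -γ - 1 by ring]; ring

lemma tay0 (γ : ℝ) (hγ : 0 < γ) : ∃ K : ℝ, 0 ≤ K ∧ ∀ v : ℝ, |v| ≤ 1/2 →
    |(1 + v) ^ (-γ)| ≤ K * |v| ^ 0 := by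
  refine ⟨(1/2 : ℝ) ^ (-γ), by positivity, fun v hv => ?_⟩
  have h := one_add_pos hv
  rw [pow_zero, mul_one, abs_of_nonneg (Real.rpow_nonneg (by linarith) _)]
  exact Real.rpow_le_rpow_of_nonpos (by norm_num) h (by linarith)

lemma tay1 (γ : ℝ) (hγ : 0 < γ) : ∃ K : ℝ, 0 ≤ K ∧ ∀ v : ℝ, |v| ≤ 1/2 →
    |(1 + v) ^ (-γ) - 1| ≤ K * |v| ^ 1 := by
  obtain ⟨K, hK, h⟩ := tay0 (γ+1) (by linarith)
  refine ⟨γ * K, by positivity, mvt_step _ (fun v => -γ * (1 + v) ^ (-(γ+1))) _ (by positivity) 0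
    (fun v hv => (hd_pow γ v hv).sub_const 1) (by simp) fun v hv => ?_⟩
  rw [abs_mul, abs_neg, abs_of_pos hγ, mul_assoc]
  exact mul_le_mul_of_nonneg_left (h v hv) hγ.le

lemma tay2 (γ : ℝ) (hγ : 0 < γ) : ∃ K : ℝ, 0 ≤ K ∧ ∀ v : ℝ, |v| ≤ 1/2 →
    |(1 + v) ^ (-γ) - (1 - γ * v)| ≤ K * |v| ^ 2 := by
  obtain ⟨K, hK, h⟩ := tay1 (γ+1) (by linarith)
  refine ⟨γ * K, by positivity, mvt_step _ (fun v => -γ * ((1 + v) ^ (-(γ+1)) - 1)) _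
    (by positivity) 1 (fun v hv => ?_) (by simp) fun v hv => ?_⟩
  · have h1 : HasDerivAt (fun v : ℝ => 1 - γ * v) (-(γ * 1)) v :=
      ((hasDerivAt_id v).const_mul γ).const_sub 1
    exact ((hd_pow γ v hv).sub h1).congr_deriv (by ring)
  · rw [abs_mul, abs_neg, abs_of_pos hγ, mul_assoc]
    exact mul_le_mul_of_nonneg_left (h v hv) hγ.le

lemma tay3 (γ : ℝ) (hγ : 0 < γ) : ∃ K : ℝ, 0 ≤ K ∧ ∀ v : ℝ, |v| ≤ 1/2 →
    |(1 + v) ^ (-γ) - (1 - γ * v + γ * (γ+1) / 2 * v ^ 2)| ≤ K * |v| ^ 3 := by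
  obtain ⟨K, hK, h⟩ := tay2 (γ+1) (by linarith)
  refine ⟨γ * K, by positivity, mvt_step _ (fun v => -γ * ((1 + v) ^ (-(γ+1)) - (1 - (γ+1) * v))) _
    (by positivity) 2 (fun v hv => ?_) (by simp) fun v hv => ?_⟩
  · have h1 : HasDerivAt (fun v : ℝ => 1 - γ * v) (-(γ * 1)) v :=
      ((hasDerivAt_id v).const_mul γ).const_sub 1
    have h2 := (hasDerivAt_pow 2 v).const_mul (γ * (γ+1) / 2)
    exact ((hd_pow γ v hv).sub (h1.add h2)).congr_deriv (by norm_num; ring)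
  · rw [abs_mul, abs_neg, abs_of_pos hγ, mul_assoc]
    exact mul_le_mul_of_nonneg_left (h v hv) hγ.le

lemma tay4 (γ : ℝ) (hγ : 0 < γ) : ∃ K : ℝ, 0 ≤ K ∧ ∀ v : ℝ, |v| ≤ 1/2 →
    |(1 + v) ^ (-γ) - (1 - γ * v + γ * (γ+1) / 2 * v ^ 2 - γ * (γ+1) * (γ+2) / 6 * v ^ 3)|
      ≤ K * |v| ^ 4 := by
  obtain ⟨K, hK, h⟩ := tay3 (γ+1) (by linarith)
  refine ⟨γ * K, by positivity, mvt_step _ (fun v => -γ * ((1 + v) ^ (-(γ+1))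
    - (1 - (γ+1) * v + (γ+1) * (γ+1+1) / 2 * v ^ 2))) _
    (by positivity) 3 (fun v hv => ?_) (by simp) fun v hv => ?_⟩
  · have h1 : HasDerivAt (fun v : ℝ => 1 - γ * v) (-(γ * 1)) v :=
      ((hasDerivAt_id v).const_mul γ).const_sub 1
    have h2 := (hasDerivAt_pow 2 v).const_mul (γ * (γ+1) / 2)
    have h3 := (hasDerivAt_pow 3 v).const_mul (γ * (γ+1) * (γ+2) / 6)
    exact ((hd_pow γ v hv).sub ((h1.add h2).sub h3)).congr_deriv (by norm_num; ring)
  · rw [abs_mul, abs_neg, abs_of_pos hγ, mul_assoc]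
    exact mul_le_mul_of_nonneg_left (h v hv) hγ.le

lemma Inc.symm' {δ w u v : ℝ} (h : Inc δ w u v) : Inc δ w v u :=
  ⟨h.w0, h.dw, by linarith [h.s1], by linarith [h.s2], by linarith [h.s3]⟩

/-- basic size facts -/
lemma Inc.usq {δ w u v ρ : ℝ} (h : Inc δ w u v) (hρ : 32 + w ≤ ρ) : u ^ 2 ≤ 8 * ρ := by
  nlinarith [h.s2, sq_nonneg v]

lemma Inc.small {δ w u v ρ : ℝ} (h : Inc δ w u v) (hρ : 32 + w ≤ ρ) : |u / ρ| ≤ 1/2 := by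
  have h1 := h.usq hρ
  have h0 := h.w0
  have hp : 0 < ρ := by linarith
  rw [abs_div, abs_of_pos hp, div_le_iff₀ hp]
  apply abs_le_of_sq_le_sq _ (by linarith)
  nlinarith

lemma pow_split {ρ u γ : ℝ} (hρ : 0 < ρ) (hu : |u / ρ| ≤ 1/2) :
    (ρ + u) ^ (-γ) = ρ ^ (-γ) * (1 + u / ρ) ^ (-γ) := by
  rw [← Real.mul_rpow hρ.le (by linarith [one_add_pos hu])]
  congr 1; field_simp

lemma lap_pow1 (γ : ℝ) (hγ : 0 < γ) : ∃ K : ℝ, 0 ≤ K ∧ ∀ δ w u v ρ : ℝ, 0 < δ → Inc δ w u v →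
    32 + w ≤ ρ → (ρ + u) ^ (-γ) + (ρ + v) ^ (-γ) - 2 * ρ ^ (-γ) ≤ ρ ^ (-γ) *
      (-γ * (2 - 2 * (δ * w)) / ρ + γ * (γ+1) * (1 + 4 * w) / ρ ^ 2
        + 26 * (γ * (γ+1) * (γ+2) / 6) * δ + 128 * K / ρ ^ 2) := by
  obtain ⟨K, hK, h⟩ := tay4 γ hγ
  refine ⟨K, hK, ?_⟩
  intro δ w u v ρ hδ hi hρ
  have hw := hi.w0
  have hp : 0 < ρ := by linarith
  have hu := hi.small hρ
  have hv := hi.symm'.small hρ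
  rw [pow_split hp hu, pow_split hp hv]
  have h1 := (abs_le.1 (h _ hu)).2
  have h2 := (abs_le.1 (h _ hv)).2
  have hq : ∀ x, x ^ 2 ≤ 8 * ρ → |x / ρ| ^ 4 ≤ 64 / ρ ^ 2 := by
    intro x hx
    have : |x / ρ| ^ 4 = (x ^ 2) ^ 2 / ρ ^ 4 := by
      rw [show |x / ρ| ^ 4 = (|x / ρ| ^ 2) ^ 2 by ring, sq_abs]; field_simp
    rw [this]
    have : (x ^ 2) ^ 2 ≤ (8 * ρ) ^ 2 := pow_le_pow_left₀ (sq_nonneg x) hx 2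
    rw [div_le_div_iff₀ (by positivity) (by positivity)]
    nlinarith [pow_pos hp 2]
  have q1 := mul_le_mul_of_nonneg_left (hq u (hi.usq hρ)) hK
  have q2 := mul_le_mul_of_nonneg_left (hq v (hi.symm'.usq hρ)) hK
  have e1 : u / ρ + v / ρ = (2 - 2 * (δ * w)) / ρ := by rw [← hi.s1]; ring
  have e2 : (u / ρ) ^ 2 + (v / ρ) ^ 2 ≤ (2 + 8 * w) / ρ ^ 2 := by
    rw [div_pow, div_pow, ← add_div]; exact div_le_div_of_nonneg_right hi.s2 (by positivity)
  have e3 : -(26 * δ) ≤ (u / ρ) ^ 3 + (v / ρ) ^ 3 := by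
    rw [div_pow, div_pow, ← add_div, le_div_iff₀ (by positivity)]
    refine le_trans ?_ hi.s3
    have : w * (1 + 12 * w) ≤ 13 * ρ ^ 3 := by
      have a1 : w * (1 + 12 * w) ≤ ρ * (13 * ρ) := by
        apply mul_le_mul <;> nlinarith
      nlinarith [pow_pos hp 2]
    nlinarith
  have g2 : 0 ≤ γ * (γ+1) / 2 := by positivity
  have g3 : 0 ≤ γ * (γ+1) * (γ+2) / 6 := by positivity
  have hP : 0 ≤ ρ ^ (-γ) := by positivity
  have hm : (1 + u / ρ) ^ (-γ) + (1 + v / ρ) ^ (-γ) - 2 ≤ 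
      (-γ * (2 - 2 * (δ * w)) / ρ + γ * (γ+1) * (1 + 4 * w) / ρ ^ 2
        + 26 * (γ * (γ+1) * (γ+2) / 6) * δ + 128 * K / ρ ^ 2) := by
    have m2 := mul_le_mul_of_nonneg_left e2 g2
    have m3 := mul_le_mul_of_nonneg_left e3 g3
    have r1 : -γ * (2 - 2 * (δ * w)) / ρ = -γ * (u / ρ + v / ρ) := by rw [e1]; ring
    have r2 : γ * (γ+1) * (1 + 4 * w) / ρ ^ 2 = γ * (γ+1) / 2 * ((2 + 8 * w) / ρ ^ 2) := by ring
    have r3 : 128 * K / ρ ^ 2 = K * (64 / ρ ^ 2) + K * (64 / ρ ^ 2) := by ring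
    rw [r1, r2, r3]
    linarith
  nlinarith [mul_le_mul_of_nonneg_left hm hP]

lemma lap_pow (d : ℕ) (γ : ℝ) (hγ : 0 < γ) : ∃ C1 : ℝ, 0 ≤ C1 ∧ ∃ C2 : ℝ, 0 ≤ C2 ∧
    ∀ (δ M : ℝ) (w u v : Fin d → ℝ), 0 < δ → 32 ≤ M → (∀ i, Inc δ (w i) (u i) (v i)) →
    ∀ ρ, ρ = M + ∑ i, w i →
    ∑ i, ((ρ + u i) ^ (-γ) + (ρ + v i) ^ (-γ) - 2 * ρ ^ (-γ)) ≤ ρ ^ (-γ) *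
      (γ * (4 * γ + 4 - 2 * d) / ρ + C1 * δ + (C2 - 4 * M * (γ * (γ+1))) / ρ ^ 2) := by
  obtain ⟨K, hK, h⟩ := lap_pow1 γ hγ
  refine ⟨2 * γ + 26 * d * (γ * (γ+1) * (γ+2) / 6), by positivity,
    γ * (γ+1) * d + 128 * K * d, by positivity, ?_⟩
  intro δ M w u v hδ hM hi ρ hρ
  have hW : 0 ≤ ∑ i, w i := Finset.sum_nonneg fun i _ => (hi i).w0
  have hp : 0 < ρ := by linarith
  have hle : ∀ i, 32 + w i ≤ ρ := by
    intro i
    have := Finset.single_le_sum (f := w) (fun i _ => (hi i).w0) (Finset.mem_univ i)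
    linarith
  refine (Finset.sum_le_sum fun i _ => h δ (w i) (u i) (v i) ρ hδ (hi i) (hle i)).trans ?_
  rw [← Finset.mul_sum]
  apply mul_le_mul_of_nonneg_left _ (by positivity)
  have hWe : ∑ i, w i = ρ - M := by linarith
  have e : ∑ i, (-γ * (2 - 2 * (δ * w i)) / ρ + γ * (γ+1) * (1 + 4 * w i) / ρ ^ 2
        + 26 * (γ * (γ+1) * (γ+2) / 6) * δ + 128 * K / ρ ^ 2)
      = (-2 * d * γ + 2 * γ * δ * ∑ i, w i) / ρ + γ * (γ+1) * (d + 4 * ∑ i, w i) / ρ ^ 2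
        + d * (26 * (γ * (γ+1) * (γ+2) / 6) * δ + 128 * K / ρ ^ 2) := by
    have : ∀ i, (-γ * (2 - 2 * (δ * w i)) / ρ + γ * (γ+1) * (1 + 4 * w i) / ρ ^ 2
        + 26 * (γ * (γ+1) * (γ+2) / 6) * δ + 128 * K / ρ ^ 2)
        = (-2 * γ / ρ + γ * (γ+1) / ρ ^ 2 + 26 * (γ * (γ+1) * (γ+2) / 6) * δ + 128 * K / ρ ^ 2)
          + (2 * γ * δ / ρ + 4 * γ * (γ+1) / ρ ^ 2) * w i := by intro i; ring
    simp only [this, Finset.sum_add_distrib, Finset.sum_const, Finset.card_univ,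
      Fintype.card_fin, nsmul_eq_mul, ← Finset.mul_sum]
    ring
  rw [e, hWe]
  have h3 : 2 * γ * δ * (ρ - M) / ρ ≤ 2 * γ * δ := by
    rw [div_le_iff₀ hp]
    apply mul_le_mul_of_nonneg_left _ (by positivity)
    linarith
  have h4 : (-2 * d * γ + 2 * γ * δ * (ρ - M)) / ρ + γ * (γ+1) * (d + 4 * (ρ - M)) / ρ ^ 2
        + d * (26 * (γ * (γ+1) * (γ+2) / 6) * δ + 128 * K / ρ ^ 2)
      = γ * (4 * γ + 4 - 2 * d) / ρ + (2 * γ * δ * (ρ - M) / ρ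
        + 26 * d * (γ * (γ+1) * (γ+2) / 6) * δ)
        + (γ * (γ+1) * d + 128 * K * d - 4 * M * (γ * (γ+1))) / ρ ^ 2 := by
    field_simp; ring
  rw [h4]
  linarith

lemma exp_step {k ρ w δ u v : ℝ} (hk : 0 ≤ k) (hk8 : k ≤ 1/8) (hi : Inc δ w u v)
    (hρ : 32 + w ≤ ρ) :
    ∃ e, Real.exp (-√(1 + k * (ρ + u))) = Real.exp (-√(1 + k * ρ)) * (1 + e) ∧
      |e| ≤ 2 * k * |u| ∧ e ≤ -(k * u) / (2 * √(1 + k * ρ)) + 12 * k := by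
  have hw := hi.w0
  have hp : 0 < ρ := by linarith
  have hu2 := hi.usq hρ
  have hu := hi.small hρ
  have hpu : 0 ≤ ρ + u := by
    have h1 := one_add_pos hu
    have : ρ + u = ρ * (1 + u / ρ) := by field_simp
    rw [this]; apply mul_nonneg hp.le; linarith
  set q := √(1 + k * ρ) with hq
  set b := √(1 + k * (ρ + u)) with hb
  have hq2 : q ^ 2 = 1 + k * ρ := Real.sq_sqrt (by positivity)
  have hb2 : b ^ 2 = 1 + k * (ρ + u) := Real.sq_sqrt (by positivity)
  have hq1 : 1 ≤ q := by rw [hq]; apply Real.one_le_sqrt.2; nlinarith [mul_nonneg hk hp.le]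
  have hb1 : 1 ≤ b := by rw [hb]; apply Real.one_le_sqrt.2; nlinarith [mul_nonneg hk hpu]
  obtain ⟨x, hx⟩ : ∃ x, x = b - q := ⟨_, rfl⟩
  have hxe : x * (q + b) = k * u := by rw [hx]; nlinarith
  have hxx : |x| * (q + b) = k * |u| := by
    rw [← abs_of_nonneg hk, ← abs_mul, ← hxe, abs_mul, abs_of_pos (show 0 < q + b by linarith)]
  have hxk : |x| ≤ k * |u| := by nlinarith [abs_nonneg x]
  have hx2 : x ^ 2 ≤ 8 * k := by
    have h1 : x ^ 2 * (q + b) ^ 2 = k ^ 2 * u ^ 2 := by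
      rw [← mul_pow, hxe, mul_pow]
    have h2 : x ^ 2 * q ^ 2 ≤ x ^ 2 * (q + b) ^ 2 := by
      apply mul_le_mul_of_nonneg_left _ (sq_nonneg x)
      apply pow_le_pow_left₀ <;> linarith
    have h3 : k ^ 2 * u ^ 2 ≤ k ^ 2 * (8 * ρ) := mul_le_mul_of_nonneg_left hu2 (sq_nonneg k)
    have h4 : k ^ 2 * (8 * ρ) ≤ 8 * k * q ^ 2 := by rw [hq2]; nlinarith
    have h5 : x ^ 2 * q ^ 2 ≤ 8 * k * q ^ 2 := by linarith
    exact le_of_mul_le_mul_right h5 (by positivity)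
  have hx1 : |x| ≤ 1 := by
    apply abs_le_of_sq_le_sq _ zero_le_one; linarith
  refine ⟨Real.exp (-x) - 1, ?_, ?_, ?_⟩
  · rw [add_sub_cancel, ← Real.exp_add]; congr 1; rw [hx]; ring
  · have := Real.abs_exp_sub_one_le (x := -x) (by rwa [abs_neg])
    rw [abs_neg] at this
    linarith
  · have h1 := (abs_le.1 (Real.abs_exp_sub_one_sub_id_le (x := -x) (by rwa [abs_neg]))).2
    have h2 : -x = -(k * u) / (2 * q) + x ^ 2 / (2 * q) := by
      have : k * u = 2 * q * x + x ^ 2 := by rw [← hxe, hx]; ring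
      rw [this]; field_simp; ring
    have h3 : x ^ 2 / (2 * q) ≤ x ^ 2 / 2 := by
      apply div_le_div_of_nonneg_left (sq_nonneg x) (by norm_num) (by linarith)
    nlinarith

lemma lap_exp (d : ℕ) (γ : ℝ) (hγ : 0 < γ) : ∃ C1 : ℝ, 0 ≤ C1 ∧ ∃ C2 : ℝ, 0 ≤ C2 ∧
    ∃ C3 : ℝ, 0 ≤ C3 ∧
    ∀ (δ M k : ℝ) (w u v : Fin d → ℝ), 0 < δ → 32 ≤ M → 0 ≤ k → k ≤ 1/8 →
    (∀ i, Inc δ (w i) (u i) (v i)) →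
    ∀ ρ, ρ = M + ∑ i, w i →
    ∑ i, ((ρ + u i) ^ (-γ) * Real.exp (-√(1 + k * (ρ + u i)))
        + (ρ + v i) ^ (-γ) * Real.exp (-√(1 + k * (ρ + v i)))
        - 2 * (ρ ^ (-γ) * Real.exp (-√(1 + k * ρ))))
      ≤ ρ ^ (-γ) * Real.exp (-√(1 + k * ρ)) *
      (γ * (4 * γ + 4 - 2 * d) / ρ + C1 * δ + (C2 - 4 * M * (γ * (γ+1))) / ρ ^ 2 + C3 * k) := by
  obtain ⟨C1, hC1, C2, hC2, hlap⟩ := lap_pow d γ hγ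
  obtain ⟨K, hK, hKb⟩ := tay1 γ hγ
  refine ⟨C1, hC1, C2, hC2, d * (25 + 32 * K), by positivity, ?_⟩
  intro δ M k w u v hδ hM hk hk8 hi ρ hρ
  have hW : 0 ≤ ∑ i, w i := Finset.sum_nonneg fun i _ => (hi i).w0
  have hp : 0 < ρ := by linarith
  have hle : ∀ i, 32 + w i ≤ ρ := by
    intro i
    have := Finset.single_le_sum (f := w) (fun i _ => (hi i).w0) (Finset.mem_univ i)
    linarith
  have hl := hlap δ M w u v hδ hM hi ρ hρ
  set E := Real.exp (-√(1 + k * ρ)) with hE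
  set P := ρ ^ (-γ) with hP
  have hE0 : 0 < E := Real.exp_pos _
  have hP0 : 0 < P := by positivity
  -- one neighbour
  have one : ∀ δ w u v : ℝ, Inc δ w u v → 32 + w ≤ ρ →
      (ρ + u) ^ (-γ) * Real.exp (-√(1 + k * (ρ + u))) - P * E
        ≤ E * ((ρ + u) ^ (-γ) - P) + P * E * (-(k * u) / (2 * √(1 + k * ρ)) + 12 * k + 16 * K * k) := by
    intro δ w u v hi hle
    obtain ⟨e, he, he1, he2⟩ := exp_step hk hk8 hi hle
    have hsm := hi.small hle
    have hp1 := hKb _ hsm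
    rw [pow_one] at hp1
    rw [he, pow_split hp hsm, ← hE, ← hP]
    obtain ⟨p, hpe⟩ : ∃ p, p = (1 + u / ρ) ^ (-γ) - 1 := ⟨_, rfl⟩
    rw [← hpe] at hp1
    have hpe' : (1 + u / ρ) ^ (-γ) = 1 + p := by rw [hpe]; ring
    rw [hpe']
    have hpe2 : p * e ≤ 16 * K * k := by
      calc p * e ≤ |p * e| := le_abs_self _
        _ = |p| * |e| := abs_mul _ _
        _ ≤ (K * |u / ρ|) * (2 * k * |u|) := by
          apply mul_le_mul hp1 he1 (abs_nonneg _); positivity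
        _ = 2 * K * k * (u ^ 2 / ρ) := by
          rw [abs_div, abs_of_pos hp, ← sq_abs u]; ring
        _ ≤ 2 * K * k * 8 := by
          apply mul_le_mul_of_nonneg_left _ (by positivity)
          rw [div_le_iff₀ hp]; exact hi.usq hle
        _ = _ := by ring
    have hPE : 0 ≤ P * E := by positivity
    have := mul_le_mul_of_nonneg_left (add_le_add he2 hpe2) hPE
    nlinarith
  have hq1 : 1 ≤ √(1 + k * ρ) := by apply Real.one_le_sqrt.2; nlinarith [mul_nonneg hk hp.le]
  have two : ∀ i, ((ρ + u i) ^ (-γ) * Real.exp (-√(1 + k * (ρ + u i)))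
        + (ρ + v i) ^ (-γ) * Real.exp (-√(1 + k * (ρ + v i))) - 2 * (P * E))
      ≤ E * ((ρ + u i) ^ (-γ) + (ρ + v i) ^ (-γ) - 2 * P) + P * E * ((25 + 32 * K) * k) := by
    intro i
    have o1 := one _ _ _ _ (hi i) (hle i)
    have o2 := one _ _ _ _ (hi i).symm' (hle i)
    have hs : -(k * u i) / (2 * √(1 + k * ρ)) + -(k * v i) / (2 * √(1 + k * ρ)) ≤ k := by
      rw [← add_div, div_le_iff₀ (by linarith)]
      have h1 := (hi i).s1
      have h2 := (hi i).dw
      have h3 : -(u i + v i) ≤ 2 := by linarith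
      nlinarith [mul_le_mul_of_nonneg_left h3 hk, mul_le_mul_of_nonneg_left hq1 hk]
    have hPE : 0 ≤ P * E := by positivity
    nlinarith [mul_le_mul_of_nonneg_left hs hPE]
  refine (Finset.sum_le_sum fun i _ => two i).trans ?_
  rw [Finset.sum_add_distrib, ← Finset.mul_sum, Finset.sum_const, Finset.card_univ,
    Fintype.card_fin, nsmul_eq_mul]
  nlinarith [mul_le_mul_of_nonneg_left hl hE0.le]

noncomputable def rho {d L : ℕ} (M : ℝ) (a : Fin d → ZMod L) : ℝ := M + ∑ i, wf (a i)

lemma rho_single {d L : ℕ} (M : ℝ) (a : Fin d → ZMod L) (i : Fin d) (x : ZMod L) :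
    rho M (a + Pi.single i x) = rho M a + (wf (a i + x) - wf (a i)) := by
  unfold rho
  obtain ⟨b, hb⟩ : ∃ b : Fin d → ZMod L, b = a + Pi.single i x := ⟨_, rfl⟩
  rw [← hb, ← Finset.add_sum_erase Finset.univ (fun j => wf (b j)) (Finset.mem_univ i),
    ← Finset.add_sum_erase Finset.univ (fun j => wf (a j)) (Finset.mem_univ i)]
  have h1 : ∑ j ∈ Finset.univ.erase i, wf (b j) = ∑ j ∈ Finset.univ.erase i, wf (a j) := by
    refine Finset.sum_congr rfl fun j hj => ?_
    rw [hb, Pi.add_apply, Pi.single_eq_of_ne (Finset.ne_of_mem_erase hj), add_zero]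
  have h2 : b i = a i + x := by rw [hb]; simp
  simp only [h1, h2]; ring

lemma lapl_rho {d L : ℕ} (M : ℝ) (F : ℝ → ℝ) (a : Fin d → ZMod L) :
    lapl (fun a => F (rho M a)) a = ∑ i, (F (rho M a + (wf (a i + 1) - wf (a i)))
      + F (rho M a + (wf (a i - 1) - wf (a i))) - 2 * F (rho M a)) := by
  unfold lapl
  refine Finset.sum_congr rfl fun i _ => ?_
  have h2 : a - Pi.single i 1 = a + Pi.single i (-1) := by
    rw [sub_eq_add_neg, ← Pi.single_neg]
  rw [h2]
  show F (rho M (a + Pi.single i 1)) + F (rho M (a + Pi.single i (-1))) - 2 * F (rho M a) = _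
  rw [rho_single, rho_single, sub_eq_add_neg (a i) 1]

lemma rho_ge {d L : ℕ} (hL : 2 ≤ L) (M : ℝ) (a : Fin d → ZMod L) : M ≤ rho M a := by
  unfold rho
  have : 0 ≤ ∑ i, wf (a i) := Finset.sum_nonneg fun i _ => wf_nonneg hL _
  linarith

lemma dlt_rho_le {d L : ℕ} (hL : 2 ≤ L) (M : ℝ) (hM : 0 ≤ M) (a : Fin d → ZMod L) :
    dlt L * rho M a ≤ 2 * M + 2 * d := by
  unfold rho
  rw [mul_add, Finset.mul_sum]
  have : ∑ i, dlt L * wf (a i) ≤ ∑ i : Fin d, (2:ℝ) := Finset.sum_le_sum fun i _ => dlt_wf_le hL _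
  simp at this
  nlinarith [dlt_le_two L]

lemma rho_zero {d L : ℕ} [NeZero L] (M : ℝ) : rho M (0 : Fin d → ZMod L) = M := by
  simp [rho, wf_zero]

lemma rho_dist {d L : ℕ} [NeZero L] (hd : 1 ≤ d) (hL : 2 ≤ L) (M : ℝ) (hM : 32 ≤ M)
    (a : Fin d → ZMod L) :
    ((torusDist 0 a : ℝ) + 1) ^ 2 / (6 * d) ≤ rho M a := by
  have hd' : (1:ℝ) ≤ d := by exact_mod_cast hd
  have h1 : (torusDist 0 a : ℝ) ^ 2 ≤ d * (3 * ∑ i, wf (a i)) := by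
    unfold torusDist
    push_cast
    refine (sq_sum_le_card_mul_sum_sq).trans ?_
    rw [Finset.card_univ, Fintype.card_fin]
    apply mul_le_mul_of_nonneg_left _ (by positivity)
    rw [Finset.mul_sum]
    refine Finset.sum_le_sum fun i _ => ?_
    have := wf_ge hL (a i)
    push_cast at this
    simpa using this
  rw [div_le_iff₀ (by positivity)]
  unfold rho
  nlinarith [sq_nonneg ((torusDist 0 a : ℝ) - 1)]

lemma dist_le {d L : ℕ} [NeZero L] (a : Fin d → ZMod L) : (torusDist 0 a : ℝ) ≤ d * L := by
  unfold torusDist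
  push_cast
  have : ∀ i ∈ Finset.univ, min (((0 : Fin d → ZMod L) i - a i).val : ℝ) ((a i - (0 : Fin d → ZMod L) i).val : ℝ) ≤ L := by
    intro i _
    refine (min_le_left _ _).trans ?_
    exact_mod_cast (ZMod.val_lt _).le
  simpa using Finset.sum_le_sum this

lemma case_one (d : ℕ) (hd : 3 ≤ d) (E0 : ℝ) (hE0 : 0 < E0) :
    ∃ M K c1 N : ℝ, 32 ≤ M ∧ 0 < K ∧ 0 < c1 ∧ 0 < N ∧ ∀ (L : ℕ) [NeZero L], 2 ≤ L → ∀ ε : ℝ, 0 < ε →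
      ε ≤ E0 → K * dlt L ≤ ε → ∀ a : Fin d → ZMod L,
      (if a = 0 then (1:ℝ) else 0) ≤
        ε * (N * (rho M a ^ (-((d:ℝ)/2 - 1)) * Real.exp (-√(1 + c1 * ε * rho M a))))
        - lapl (fun a => N * (rho M a ^ (-((d:ℝ)/2 - 1)) * Real.exp (-√(1 + c1 * ε * rho M a)))) a := by
  have hd' : (3:ℝ) ≤ d := by exact_mod_cast hd
  obtain ⟨α, hα⟩ : ∃ α : ℝ, α = (d:ℝ)/2 - 1 := ⟨_, rfl⟩
  have hα0 : 0 < α := by linarith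
  rw [← hα]
  obtain ⟨C1, hC1, C2, hC2, C3, hC3, hlap⟩ := lap_exp d α hα0
  have hq : 0 < 4 * (α * (α+1)) := by positivity
  set M := max 32 ((C2 + 1) / (4 * (α * (α+1)))) with hM
  have hM32 : 32 ≤ M := le_max_left _ _
  have hM2 : C2 - 4 * M * (α * (α+1)) ≤ -1 := by
    have : (C2 + 1) / (4 * (α * (α+1))) ≤ M := le_max_right _ _
    rw [div_le_iff₀ hq] at this
    linarith
  set c1 := min (1 / (8 * E0)) (1 / (2 * (C3 + 1))) with hc1
  have hc0 : 0 < c1 := by rw [hc1]; apply lt_min <;> positivity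
  have hM0 : 0 < M := by linarith
  set N := M ^ α * M ^ 2 * Real.exp (√(1 + M)) with hN
  have hN0 : 0 < N := by positivity
  refine ⟨M, 2 * C1 + 1, c1, N, hM32, by positivity, hc0, hN0, ?_⟩
  intro L _ hL ε hε hεE hKε a
  have hk : 0 ≤ c1 * ε := by positivity
  have hk8 : c1 * ε ≤ 1/8 := by
    have : c1 ≤ 1 / (8 * E0) := min_le_left _ _
    calc c1 * ε ≤ 1 / (8 * E0) * E0 := by apply mul_le_mul this hεE hε.le; positivity
      _ = 1/8 := by field_simp
  have hC3k : C3 * (c1 * ε) ≤ ε / 2 := by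
    have : c1 ≤ 1 / (2 * (C3 + 1)) := min_le_right _ _
    rw [le_div_iff₀ (by positivity)] at this
    nlinarith
  have hδ := dlt_pos hL
  have hC1δ : C1 * dlt L ≤ ε / 2 := by nlinarith
  have hl := hlap (dlt L) M (c1 * ε) (fun i => wf (a i)) (fun i => wf (a i + 1) - wf (a i))
    (fun i => wf (a i - 1) - wf (a i)) hδ hM32 hk hk8 (fun i => inc_wf hL (a i)) (rho M a) rfl
  have hfun := lapl_rho M (fun r => N * (r ^ (-α) * Real.exp (-√(1 + c1 * ε * r)))) a
  rw [hfun]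
  have hρM := rho_ge hL M a
  set r := rho M a with hr
  have hr0 : 0 < r := by linarith
  have hsum : ∑ i, (N * ((r + (wf (a i + 1) - wf (a i))) ^ (-α) * Real.exp (-√(1 + c1 * ε * (r + (wf (a i + 1) - wf (a i))))))
      + N * ((r + (wf (a i - 1) - wf (a i))) ^ (-α) * Real.exp (-√(1 + c1 * ε * (r + (wf (a i - 1) - wf (a i))))))
      - 2 * (N * (r ^ (-α) * Real.exp (-√(1 + c1 * ε * r)))))
      = N * ∑ i, ((r + (wf (a i + 1) - wf (a i))) ^ (-α) * Real.exp (-√(1 + c1 * ε * (r + (wf (a i + 1) - wf (a i)))))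
      + ((r + (wf (a i - 1) - wf (a i))) ^ (-α) * Real.exp (-√(1 + c1 * ε * (r + (wf (a i - 1) - wf (a i))))))
      - 2 * ((r ^ (-α) * Real.exp (-√(1 + c1 * ε * r))))) := by
    rw [Finset.mul_sum]; refine Finset.sum_congr rfl fun i _ => by ring
  rw [hsum]
  set g := r ^ (-α) * Real.exp (-√(1 + c1 * ε * r)) with hg
  have hg0 : 0 < g := by positivity
  have hb : α * (4 * α + 4 - 2 * d) / r + C1 * dlt L + (C2 - 4 * M * (α * (α+1))) / r ^ 2 + C3 * (c1 * ε)
      ≤ ε - 1 / r ^ 2 := by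
    have z : 4 * α + 4 - 2 * d = 0 := by rw [hα]; ring
    rw [z]
    have : (C2 - 4 * M * (α * (α+1))) / r ^ 2 ≤ (-1) / r ^ 2 :=
      div_le_div_of_nonneg_right hM2 (by positivity)
    rw [neg_div] at this
    simp only [mul_zero, zero_div]
    linarith
  have hl2 := hl.trans (mul_le_mul_of_nonneg_left hb hg0.le)
  have hl3 := mul_le_mul_of_nonneg_left hl2 hN0.le
  have main : N * (g * (1 / r ^ 2)) ≤ ε * (N * g) - N * (g * (ε - 1 / r ^ 2)) := by
    apply le_of_eq; ring
  refine le_trans ?_ (le_trans main (sub_le_sub_left hl3 _))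
  split_ifs with ha
  · have hrM : r = M := by rw [hr, ha, rho_zero]
    rw [hg, hrM, hN]
    have e1 : M ^ (-α) = (M ^ α)⁻¹ := Real.rpow_neg hM0.le α
    have e2 : Real.exp (-√(1 + c1 * ε * M)) ≥ (Real.exp (√(1 + M)))⁻¹ := by
      rw [← Real.exp_neg]
      apply Real.exp_le_exp.2
      apply neg_le_neg
      apply Real.sqrt_le_sqrt
      nlinarith
    have hMα : 0 < M ^ α := by positivity
    have hX := Real.exp_pos (√(1 + M))
    rw [e1]
    calc (1:ℝ) = M ^ α * M ^ 2 * Real.exp (√(1 + M)) * ((M ^ α)⁻¹ * (Real.exp (√(1 + M)))⁻¹ * (1 / M ^ 2)) := by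
          field_simp
      _ ≤ _ := by
          apply mul_le_mul_of_nonneg_left _ (by positivity)
          apply mul_le_mul_of_nonneg_right _ (by positivity)
          apply mul_le_mul_of_nonneg_left e2 (by positivity)
  · positivity

lemma scal (C1 C1' γ α : ℝ) (h1 : 0 ≤ C1) (h1' : 0 ≤ C1') (hγ : 0 < γ) (hα : 1/2 ≤ α) :
    ∃ D : ℝ, 0 ≤ D ∧ ∀ z : ℝ, 0 < z →
      C1 + C1' * z ^ (1/4 : ℝ) ≤ γ * z ^ (1/4 : ℝ) / z + D * z ^ α := by
  set C := C1 + C1' + 1 with hC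
  have hC0 : 0 < C := by positivity
  set z0 := min 1 ((γ / C) ^ 2) with hz0
  have hz0p : 0 < z0 := by rw [hz0]; apply lt_min <;> positivity
  refine ⟨C1 * z0 ^ (-α) + C1' * z0 ^ (1/4 - α), by positivity, ?_⟩
  intro z hz
  rcases le_total z z0 with h | h
  · have hz1 : z ≤ 1 := h.trans (min_le_left _ _)
    have hz2 : z ≤ (γ / C) ^ 2 := h.trans (min_le_right _ _)
    have hs : √z ≤ γ / C := by
      rw [← Real.sqrt_sq (show 0 ≤ γ / C by positivity)]; exact Real.sqrt_le_sqrt hz2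
    have hq1 : z ^ (1/4 : ℝ) ≤ 1 := Real.rpow_le_one hz.le hz1 (by norm_num)
    have hq2 : √z ≤ z ^ (1/4 : ℝ) := by
      rw [Real.sqrt_eq_rpow]
      exact Real.rpow_le_rpow_of_exponent_ge hz hz1 (by norm_num)
    have hsz : 0 < √z := Real.sqrt_pos.2 hz
    have hss : √z * √z = z := Real.mul_self_sqrt hz.le
    have h3 : C ≤ γ * z ^ (1/4 : ℝ) / z := by
      rw [le_div_iff₀ hC0] at hs
      rw [le_div_iff₀ hz]
      nlinarith
    have h4 : 0 ≤ (C1 * z0 ^ (-α) + C1' * z0 ^ (1/4 - α)) * z ^ α := by positivity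
    nlinarith
  · have a1 : 1 ≤ z0 ^ (-α) * z ^ α := by
      rw [Real.rpow_neg hz0p.le, inv_mul_eq_div, one_le_div (by positivity)]
      exact Real.rpow_le_rpow hz0p.le h (by linarith)
    have a2 : z ^ (1/4 : ℝ) ≤ z0 ^ (1/4 - α) * z ^ α := by
      calc z ^ (1/4 : ℝ) = z ^ (1/4 - α) * z ^ α := by rw [← Real.rpow_add hz]; ring_nf
        _ ≤ _ := by
          apply mul_le_mul_of_nonneg_right _ (by positivity)
          exact Real.rpow_le_rpow_of_nonpos hz0p h (by linarith)
    have h4 : 0 ≤ γ * z ^ (1/4 : ℝ) / z := by positivity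
    nlinarith [mul_le_mul_of_nonneg_left a1 h1, mul_le_mul_of_nonneg_left a2 h1']

set_option maxHeartbeats 1000000 in
lemma case_two (d : ℕ) (hd : 3 ≤ d) :
    ∃ M D N : ℝ, 32 ≤ M ∧ 0 ≤ D ∧ 0 < N ∧ ∀ (L : ℕ) [NeZero L], 2 ≤ L → ∀ ε : ℝ, 0 < ε →
      ∀ a : Fin d → ZMod L,
      (if a = 0 then (1:ℝ) else 0) ≤
        ε * (N * (rho M a ^ (-((d:ℝ)/2 - 1)) + dlt L ^ (1/4 : ℝ) * rho M a ^ (-((d:ℝ)/2 - 1 - 1/4))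
          + D * dlt L ^ ((d:ℝ)/2) / ε))
        - lapl (fun a => N * (rho M a ^ (-((d:ℝ)/2 - 1))
          + dlt L ^ (1/4 : ℝ) * rho M a ^ (-((d:ℝ)/2 - 1 - 1/4))
          + D * dlt L ^ ((d:ℝ)/2) / ε)) a := by
  have hd' : (3:ℝ) ≤ d := by exact_mod_cast hd
  obtain ⟨α, hα⟩ : ∃ α : ℝ, α = (d:ℝ)/2 - 1 := ⟨_, rfl⟩
  obtain ⟨γ, hγ⟩ : ∃ γ : ℝ, γ = α - 1/4 := ⟨_, rfl⟩
  have hα0 : 0 < α := by linarith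
  have hγ0 : 0 < γ := by linarith
  rw [← hα, ← hγ]
  obtain ⟨C1, hC1, C2, hC2, hlap⟩ := lap_pow d α hα0
  obtain ⟨C1', hC1', C2', hC2', hlap'⟩ := lap_pow d γ hγ0
  obtain ⟨D, hD, hscal⟩ := scal C1 C1' γ α hC1 hC1' hγ0 (by linarith)
  have hq : 0 < 4 * (α * (α+1)) := by positivity
  have hq' : 0 < 4 * (γ * (γ+1)) := by positivity
  set M := max 32 (max ((C2 + 1) / (4 * (α * (α+1)))) (C2' / (4 * (γ * (γ+1))))) with hM
  have hM32 : 32 ≤ M := le_max_left _ _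
  have hM0 : 0 < M := by linarith
  have hM2 : C2 - 4 * M * (α * (α+1)) ≤ -1 := by
    have : (C2 + 1) / (4 * (α * (α+1))) ≤ M := (le_max_left _ _).trans (le_max_right _ _)
    rw [div_le_iff₀ hq] at this
    linarith
  have hM3 : C2' - 4 * M * (γ * (γ+1)) ≤ 0 := by
    have : C2' / (4 * (γ * (γ+1))) ≤ M := (le_max_right _ _).trans (le_max_right _ _)
    rw [div_le_iff₀ hq'] at this
    linarith
  refine ⟨M, D, M ^ α * M ^ 2, hM32, hD, by positivity, ?_⟩
  intro L _ hL ε hε a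
  have hδ := dlt_pos hL
  have hl := hlap (dlt L) M (fun i => wf (a i)) (fun i => wf (a i + 1) - wf (a i))
    (fun i => wf (a i - 1) - wf (a i)) hδ hM32 (fun i => inc_wf hL (a i)) (rho M a) rfl
  have hl' := hlap' (dlt L) M (fun i => wf (a i)) (fun i => wf (a i + 1) - wf (a i))
    (fun i => wf (a i - 1) - wf (a i)) hδ hM32 (fun i => inc_wf hL (a i)) (rho M a) rfl
  set N := M ^ α * M ^ 2 with hN
  have hN0 : 0 < N := by positivity
  rw [lapl_rho M (fun r => N * (r ^ (-α) + dlt L ^ (1/4 : ℝ) * r ^ (-γ)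
          + D * dlt L ^ ((d:ℝ)/2) / ε)) a]
  have hρM := rho_ge hL M a
  have hr_zero : a = 0 → rho M a = M := fun h => by rw [h, rho_zero]
  set r := rho M a with hr
  have hr0 : 0 < r := by linarith
  set δ := dlt L with hδe
  set X := D * δ ^ ((d:ℝ)/2) / ε with hX
  set U := ∑ i, ((r + (wf (a i + 1) - wf (a i))) ^ (-α) + (r + (wf (a i - 1) - wf (a i))) ^ (-α)
    - 2 * r ^ (-α)) with hU
  set V := ∑ i, ((r + (wf (a i + 1) - wf (a i))) ^ (-γ) + (r + (wf (a i - 1) - wf (a i))) ^ (-γ)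
    - 2 * r ^ (-γ)) with hV
  have hsum : ∑ i, (N * ((r + (wf (a i + 1) - wf (a i))) ^ (-α)
        + δ ^ (1/4 : ℝ) * (r + (wf (a i + 1) - wf (a i))) ^ (-γ) + X)
      + N * ((r + (wf (a i - 1) - wf (a i))) ^ (-α)
        + δ ^ (1/4 : ℝ) * (r + (wf (a i - 1) - wf (a i))) ^ (-γ) + X)
      - 2 * (N * (r ^ (-α) + δ ^ (1/4 : ℝ) * r ^ (-γ) + X))) = N * (U + δ ^ (1/4 : ℝ) * V) := by
    rw [hU, hV, Finset.mul_sum, ← Finset.sum_add_distrib, Finset.mul_sum]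
    refine Finset.sum_congr rfl fun i _ => by ring
  rw [hsum]
  have hP0 : 0 < r ^ (-α) := by positivity
  have hQ0 : 0 < r ^ (-γ) := by positivity
  have hδ4 : 0 < δ ^ (1/4 : ℝ) := by positivity
  have hU1 : U ≤ r ^ (-α) * (C1 * δ - 1 / r ^ 2) := by
    refine hl.trans (mul_le_mul_of_nonneg_left ?_ hP0.le)
    have z : 4 * α + 4 - 2 * d = 0 := by rw [hα]; ring
    rw [z]
    have : (C2 - 4 * M * (α * (α+1))) / r ^ 2 ≤ (-1) / r ^ 2 :=
      div_le_div_of_nonneg_right hM2 (by positivity)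
    rw [neg_div] at this
    simp only [mul_zero, zero_div]
    linarith
  have hV1 : V ≤ r ^ (-γ) * (-(γ / r) + C1' * δ) := by
    refine hl'.trans (mul_le_mul_of_nonneg_left ?_ hQ0.le)
    have z : 4 * γ + 4 - 2 * d = -1 := by rw [hγ, hα]; ring
    rw [z]
    have : (C2' - 4 * M * (γ * (γ+1))) / r ^ 2 ≤ 0 :=
      div_nonpos_of_nonpos_of_nonneg hM3 (by positivity)
    have e : γ * (-1) / r = -(γ / r) := by ring
    rw [e]
    linarith
  -- scaling
  have hz : 0 < δ * r := by positivity
  have hs := hscal (δ * r) hz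
  have e1 : δ ^ (1/4 : ℝ) * r ^ (-γ) = r ^ (-α) * (δ * r) ^ (1/4 : ℝ) := by
    rw [Real.mul_rpow hδ.le hr0.le, show -γ = -α + 1/4 by rw [hγ]; ring, Real.rpow_add hr0]; ring
  have e2 : δ ^ ((d:ℝ)/2) = δ * (r ^ (-α) * (δ * r) ^ α) := by
    rw [Real.mul_rpow hδ.le hr0.le, show (d:ℝ)/2 = 1 + α by rw [hα]; ring, Real.rpow_add hδ,
      Real.rpow_one, Real.rpow_neg hr0.le]
    field_simp
  have hεX : ε * X = D * δ ^ ((d:ℝ)/2) := by rw [hX]; field_simp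
  have main : r ^ (-α) * (1 / r ^ 2) ≤ ε * X - (U + δ ^ (1/4 : ℝ) * V) := by
    have m1 := mul_le_mul_of_nonneg_left hV1 hδ4.le
    have m2 : δ ^ (1/4 : ℝ) * (r ^ (-γ) * (-(γ / r) + C1' * δ))
        = δ * (r ^ (-α) * (C1' * (δ * r) ^ (1/4:ℝ) - γ * (δ * r) ^ (1/4 : ℝ) / (δ * r))) := by
      rw [← mul_assoc, e1]; field_simp; ring
    have m3 := mul_le_mul_of_nonneg_left hs (show 0 ≤ δ * r ^ (-α) by positivity)
    rw [hεX, e2]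
    rw [m2] at m1
    generalize γ * (δ * r) ^ (1/4 : ℝ) / (δ * r) = Y at m1 m3
    generalize (δ * r) ^ (1/4 : ℝ) = q at m1 m3
    generalize (δ * r) ^ α = zα at m3 ⊢
    clear_value U V δ
    generalize 1 / r ^ 2 = R at hU1 ⊢
    generalize r ^ (-α) = P at hU1 m1 m3 ⊢
    generalize δ ^ (1/4 : ℝ) * V = V' at m1 ⊢
    linarith
  have hPQX : 0 ≤ r ^ (-α) + δ ^ (1/4 : ℝ) * r ^ (-γ) := by positivity
  have fin : N * (r ^ (-α) * (1 / r ^ 2)) ≤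
      ε * (N * (r ^ (-α) + δ ^ (1/4 : ℝ) * r ^ (-γ) + X)) - N * (U + δ ^ (1/4 : ℝ) * V) := by
    have := mul_le_mul_of_nonneg_left main hN0.le
    have h2 : 0 ≤ ε * N * (r ^ (-α) + δ ^ (1/4 : ℝ) * r ^ (-γ)) := by positivity
    nlinarith
  refine le_trans ?_ fin
  split_ifs with ha
  · rw [hr_zero ha, hN, Real.rpow_neg hM0.le]
    have hMα : 0 < M ^ α := by positivity
    apply le_of_eq; field_simp
  · positivity

lemma rho_pow_le {d L : ℕ} [NeZero L] (hd : 3 ≤ d) (hL : 2 ≤ L) (M : ℝ) (hM : 32 ≤ M)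
    (a : Fin d → ZMod L) :
    rho M a ^ (-((d:ℝ)/2 - 1)) ≤ (6 * (d:ℝ)) ^ ((d:ℝ)/2 - 1) *
      (((torusDist 0 a : ℝ) + 1) ^ (d - 2))⁻¹ := by
  have hd' : (3:ℝ) ≤ d := by exact_mod_cast hd
  have h := rho_dist (by omega) hL M hM a
  set n : ℝ := (torusDist 0 a : ℝ) with hn
  have hn0 : 0 ≤ n := by positivity
  have h0 : 0 < (n + 1) ^ 2 / (6 * (d:ℝ)) := by positivity
  refine (Real.rpow_le_rpow_of_nonpos h0 h (by linarith)).trans (le_of_eq ?_)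
  rw [Real.rpow_neg h0.le, Real.div_rpow (by positivity) (by positivity), inv_div,
    ← Real.rpow_natCast (n+1) 2, ← Real.rpow_mul (by positivity), ← Real.rpow_natCast (n+1) (d-2)]
  have : ((2:ℕ):ℝ) * ((d:ℝ)/2 - 1) = ((d - 2 : ℕ) : ℝ) := by
    rw [Nat.cast_sub (by omega)]; push_cast; ring
  rw [this]; rfl

lemma elliptic (d : ℕ) (hd : 3 ≤ d) (E0 : ℝ) (hE0 : 0 < E0) :
    ∃ c : ℝ, 0 < c ∧ ∃ C : ℝ, 0 < C ∧ ∀ (L : ℕ) [NeZero L], 2 ≤ L → ∀ ε : ℝ, 0 < ε → ε ≤ E0 →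
      ∃ f : (Fin d → ZMod L) → ℝ, (∀ a, 0 ≤ f a) ∧
        (∀ a, (if a = 0 then (1:ℝ) else 0) ≤ ε * f a - lapl f a) ∧
        ∀ a, f a ≤ C * ((((torusDist 0 a : ℝ) + 1) ^ (d - 2))⁻¹ + ((L:ℝ) ^ d * ε)⁻¹) *
          Real.exp (-c * (torusDist 0 a : ℝ) * √ε) := by
  have hd' : (3:ℝ) ≤ d := by exact_mod_cast hd
  obtain ⟨M, K, c1, N, hM, hK, hc1, hN, h1⟩ := case_one d hd E0 hE0
  obtain ⟨M', D, N', hM', hD, hN', h2⟩ := case_two d hd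
  set A := (6 * (d:ℝ)) ^ ((d:ℝ)/2 - 1) with hA
  have hA0 : 0 < A := by positivity
  set c := √(c1 / (6 * d)) with hc
  have hc0 : 0 < c := by rw [hc]; positivity
  set Z := (2 * M' + 2 * d) ^ (1/4 : ℝ) with hZ
  have hZ0 : 0 ≤ Z := by positivity
  set W := c * d * √(20 * K) with hW
  set G := (20:ℝ) ^ ((d:ℝ)/2) with hG
  have hG0 : 0 < G := by positivity
  set C2 := N' * (A * (1 + Z) + D * G) * Real.exp W with hC2
  have hC20 : 0 < C2 := by positivity
  refine ⟨c, hc0, N * A + C2, by positivity, ?_⟩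
  intro L _ hL ε hε hεE
  have hLr : (0:ℝ) < L := by exact_mod_cast (by omega : 0 < L)
  have hδ := dlt_pos hL
  by_cases hcase : K * dlt L ≤ ε
  · refine ⟨_, ?_, h1 L hL ε hε hεE hcase, ?_⟩
    · intro a
      have := rho_ge hL M a
      have : 0 < rho M a := by linarith
      positivity
    · intro a
      have hr := rho_ge hL M a
      have hr0 : 0 < rho M a := by linarith
      have hp := rho_pow_le hd hL M hM a
      have hdist := rho_dist (by omega) hL M hM a
      have hexp : Real.exp (-√(1 + c1 * ε * rho M a)) ≤ Real.exp (-c * (torusDist 0 a : ℝ) * √ε) := by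
        apply Real.exp_le_exp.2
        have hn0 : (0:ℝ) ≤ torusDist 0 a := by positivity
        have : c * (torusDist 0 a : ℝ) * √ε ≤ √(1 + c1 * ε * rho M a) := by
          apply Real.le_sqrt_of_sq_le
          rw [mul_pow, mul_pow, hc, Real.sq_sqrt (by positivity), Real.sq_sqrt hε.le]
          have h3 : (torusDist 0 a : ℝ) ^ 2 / (6 * d) ≤ rho M a := by
            refine le_trans ?_ hdist
            apply div_le_div_of_nonneg_right _ (by positivity)
            nlinarith
          calc c1 / (6 * d) * (torusDist 0 a : ℝ) ^ 2 * ε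
              = c1 * ε * ((torusDist 0 a : ℝ) ^ 2 / (6 * d)) := by ring
            _ ≤ c1 * ε * rho M a := by
              apply mul_le_mul_of_nonneg_left h3; positivity
            _ ≤ _ := by linarith
        linarith
      have hB : 0 ≤ ((L:ℝ) ^ d * ε)⁻¹ := by positivity
      have hB' : 0 ≤ (((torusDist 0 a : ℝ) + 1) ^ (d - 2))⁻¹ := by positivity
      calc N * (rho M a ^ (-((d:ℝ)/2 - 1)) * Real.exp (-√(1 + c1 * ε * rho M a)))
          ≤ N * ((A * (((torusDist 0 a : ℝ) + 1) ^ (d - 2))⁻¹) * Real.exp (-c * (torusDist 0 a : ℝ) * √ε)) := by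
            apply mul_le_mul_of_nonneg_left _ hN.le
            apply mul_le_mul hp hexp (Real.exp_pos _).le; positivity
        _ = (N * A) * (((torusDist 0 a : ℝ) + 1) ^ (d - 2))⁻¹ * Real.exp (-c * (torusDist 0 a : ℝ) * √ε) := by ring
        _ ≤ _ := by
            apply mul_le_mul_of_nonneg_right _ (Real.exp_pos _).le
            apply mul_le_mul (by linarith) (by linarith) hB' (by positivity)
  · push Not at hcase
    refine ⟨_, ?_, h2 L hL ε hε, ?_⟩
    · intro a
      have := rho_ge hL M' a
      have : 0 < rho M' a := by linarith
      positivity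
    · intro a
      have hr := rho_ge hL M' a
      have hr0 : 0 < rho M' a := by linarith
      have hp := rho_pow_le hd hL M' hM' a
      have hdl := dlt_le hL
      have hn0 : (0:ℝ) ≤ torusDist 0 a := by positivity
      have hB' : 0 ≤ (((torusDist 0 a : ℝ) + 1) ^ (d - 2))⁻¹ := by positivity
      set b := (((torusDist 0 a : ℝ) + 1) ^ (d - 2))⁻¹ with hb
      have e1 : dlt L ^ (1/4 : ℝ) * rho M' a ^ (-((d:ℝ)/2 - 1 - 1/4))
          = rho M' a ^ (-((d:ℝ)/2 - 1)) * (dlt L * rho M' a) ^ (1/4 : ℝ) := by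
        rw [Real.mul_rpow hδ.le hr0.le, show -((d:ℝ)/2 - 1 - 1/4) = -((d:ℝ)/2 - 1) + 1/4 by ring,
          Real.rpow_add hr0]; ring
      have hz : (dlt L * rho M' a) ^ (1/4 : ℝ) ≤ Z :=
        Real.rpow_le_rpow (by positivity) (dlt_rho_le hL M' (by linarith) a) (by norm_num)
      have t2 : dlt L ^ (1/4 : ℝ) * rho M' a ^ (-((d:ℝ)/2 - 1 - 1/4)) ≤ A * b * Z := by
        rw [e1]; apply mul_le_mul hp hz <;> positivity
      have t3 : dlt L ^ ((d:ℝ)/2) ≤ G * ((L:ℝ) ^ d)⁻¹ := by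
        refine (Real.rpow_le_rpow hδ.le hdl (by positivity)).trans (le_of_eq ?_)
        rw [Real.div_rpow (by norm_num) (by positivity), ← Real.rpow_natCast (L:ℝ) 2,
          ← Real.rpow_mul hLr.le, show ((2:ℕ):ℝ) * ((d:ℝ)/2) = (d:ℝ) by push_cast; ring,
          Real.rpow_natCast, div_eq_mul_inv]
      have t3' : D * dlt L ^ ((d:ℝ)/2) / ε ≤ D * G * ((L:ℝ) ^ d * ε)⁻¹ := by
        rw [mul_inv, div_eq_mul_inv, ← mul_assoc, mul_assoc D G]
        apply mul_le_mul_of_nonneg_right _ (by positivity)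
        exact mul_le_mul_of_nonneg_left t3 hD
      have hB0 : 0 ≤ ((L:ℝ) ^ d * ε)⁻¹ := by positivity
      have hexp : 1 ≤ Real.exp W * Real.exp (-c * (torusDist 0 a : ℝ) * √ε) := by
        rw [← Real.exp_add]
        apply Real.one_le_exp
        have hdd := dist_le a
        have hsq : √ε ≤ √(20 * K) / L := by
          have : ε ≤ 20 * K / (L:ℝ) ^ 2 := by
            refine hcase.le.trans ?_
            calc K * dlt L ≤ K * (20 / (L:ℝ) ^ 2) := mul_le_mul_of_nonneg_left hdl hK.le
              _ = _ := by ring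
          refine (Real.sqrt_le_sqrt this).trans (le_of_eq ?_)
          rw [Real.sqrt_div (by positivity), Real.sqrt_sq hLr.le]
        have : c * (torusDist 0 a : ℝ) * √ε ≤ W := by
          calc c * (torusDist 0 a : ℝ) * √ε ≤ c * (d * L) * (√(20 * K) / L) := by
                apply mul_le_mul (mul_le_mul_of_nonneg_left hdd hc0.le) hsq (Real.sqrt_nonneg _)
                positivity
            _ = W := by rw [hW]; field_simp
        linarith
      have hX : 0 ≤ b + ((L:ℝ) ^ d * ε)⁻¹ := by positivity
      have hDG : 0 ≤ D * G := by positivity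
      have hAZ : 0 ≤ A * (1 + Z) := by positivity
      have main : rho M' a ^ (-((d:ℝ)/2 - 1)) + dlt L ^ (1/4 : ℝ) * rho M' a ^ (-((d:ℝ)/2 - 1 - 1/4))
          + D * dlt L ^ ((d:ℝ)/2) / ε ≤ (A * (1 + Z) + D * G) * (b + ((L:ℝ) ^ d * ε)⁻¹) := by
        nlinarith [mul_nonneg hAZ hB0, mul_nonneg hDG hB']
      calc N' * (rho M' a ^ (-((d:ℝ)/2 - 1)) + dlt L ^ (1/4 : ℝ) * rho M' a ^ (-((d:ℝ)/2 - 1 - 1/4))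
          + D * dlt L ^ ((d:ℝ)/2) / ε)
          ≤ N' * ((A * (1 + Z) + D * G) * (b + ((L:ℝ) ^ d * ε)⁻¹)) * 1 := by
            rw [mul_one]; exact mul_le_mul_of_nonneg_left main hN'.le
        _ ≤ N' * ((A * (1 + Z) + D * G) * (b + ((L:ℝ) ^ d * ε)⁻¹)) *
            (Real.exp W * Real.exp (-c * (torusDist 0 a : ℝ) * √ε)) := by
            apply mul_le_mul_of_nonneg_left hexp; positivity
        _ = C2 * (b + ((L:ℝ) ^ d * ε)⁻¹) * Real.exp (-c * (torusDist 0 a : ℝ) * √ε) := by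
            rw [hC2]; ring
        _ ≤ _ := by
            apply mul_le_mul_of_nonneg_right _ (Real.exp_pos _).le
            apply mul_le_mul_of_nonneg_right _ hX
            have : 0 < N * A := by positivity
            linarith

lemma lapl_smul {d L : ℕ} (s : ℝ) (f : (Fin d → ZMod L) → ℝ) (a : Fin d → ZMod L) :
    lapl (fun a => s * f a) a = s * lapl f a := by
  unfold lapl
  rw [Finset.mul_sum]
  exact Finset.sum_congr rfl fun i _ => by ring

lemma exp_ell {d L : ℕ} [NeZero L] (t c ε : ℝ) (ht : t < 1) (hc : 0 < c)
    (hε : (1 - t) / 2 ≤ ε) (a : Fin d → ZMod L) :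
    Real.exp (-c * (torusDist 0 a : ℝ) * √ε) ≤
      Real.exp d * Real.exp (-(min (c/2) 1) * (torusDist 0 a : ℝ) / ellT L t) := by
  rw [← Real.exp_add]
  apply Real.exp_le_exp.2
  have hn0 : (0:ℝ) ≤ torusDist 0 a := by positivity
  have hdd := dist_le a
  have hLr : (0:ℝ) < L := by exact_mod_cast Nat.pos_of_ne_zero (NeZero.ne L)
  have hm0 : 0 ≤ min (c/2) 1 := by apply le_min <;> linarith
  have ht' : 0 < 1 - t := by linarith
  have hs : √(1 - t) / 2 ≤ √ε := by
    apply Real.le_sqrt_of_sq_le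
    rw [div_pow, Real.sq_sqrt ht'.le]; linarith
  have key : min (c/2) 1 * (torusDist 0 a : ℝ) / ellT L t ≤ d + c * (torusDist 0 a : ℝ) * √ε := by
    unfold ellT
    rcases min_choice ((1 - t) ^ (-(1 / 2 : ℝ))) (L : ℝ) with h | h <;> rw [h]
    · rw [Real.rpow_neg ht'.le, ← Real.sqrt_eq_rpow, div_inv_eq_mul]
      have h1 : min (c/2) 1 * (torusDist 0 a : ℝ) ≤ c / 2 * torusDist 0 a :=
        mul_le_mul_of_nonneg_right (min_le_left _ _) hn0
      have h2 : min (c/2) 1 * (torusDist 0 a : ℝ) * √(1 - t) ≤ c / 2 * torusDist 0 a * √(1 - t) :=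
        mul_le_mul_of_nonneg_right h1 (Real.sqrt_nonneg _)
      have h3 := mul_le_mul_of_nonneg_left hs (show 0 ≤ c * (torusDist 0 a : ℝ) by positivity)
      have : (0:ℝ) ≤ d := by positivity
      linarith
    · rw [div_le_iff₀ hLr]
      have h1 : min (c/2) 1 * (torusDist 0 a : ℝ) ≤ 1 * torusDist 0 a :=
        mul_le_mul_of_nonneg_right (min_le_right _ _) hn0
      have h2 : 0 ≤ c * (torusDist 0 a : ℝ) * √ε * L := by positivity
      linarith
  rw [neg_mul, neg_mul, neg_mul, neg_div]
  linarith

/-- **Exponential decay of the propagator (Lemma 2.19, part 5, first bound).**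
There are constants `c_d, C_d > 0`, depending only on `d` and `C₀`, such that for every
`L ≥ 2`, `t ∈ [0,1)`, unimodular `m ∈ ℂ`, `ξ ∈ {t, t·m², t·conj(m)²}` and `a ∈ ℤ_L^d`,
`|Θ^(B)_ξ(0,a)| ≤ C_d · B_{t,|a|} · exp(−c_d·|a|/ℓ_t)`. -/
theorem propagator_exponential_decay (d : ℕ) (hd : 3 ≤ d) (C₀ : ℝ) (hC₀ : 1 ≤ C₀) :
    ∃ c : ℝ, 0 < c ∧ ∃ C : ℝ, 0 < C ∧
      ∀ (L : ℕ) [NeZero L], 2 ≤ L →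
        ∀ lam : ℝ, C₀⁻¹ ≤ lam → lam ≤ C₀ →
          ∀ t : ℝ, 0 ≤ t → t < 1 →
            ∀ m : ℂ, ‖m‖ = 1 →
              ∀ ξ ∈ ({(t : ℂ), (t : ℂ) * m ^ 2, (t : ℂ) * (starRingEnd ℂ) m ^ 2} : Set ℂ),
                ∀ a : Fin d → ZMod L,
                  ‖ThetaB d L lam ξ 0 a‖ ≤
                    C * Bparam d L t (torusDist 0 a) *
                      Real.exp (-c * (torusDist 0 a : ℝ) / ellT L t) := by
  have hd' : (3:ℝ) ≤ d := by exact_mod_cast hd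
  have hC00 : 0 < C₀ := by linarith
  set μ0 := C₀⁻¹ ^ 2 / (1 + 2 * d * C₀ ^ 2) with hμ0
  have hμ0p : 0 < μ0 := by positivity
  obtain ⟨c, hc, C, hC, hell⟩ := elliptic d hd (1 / μ0) (by positivity)
  refine ⟨min (c/2) 1, by apply lt_min <;> linarith, (2 / μ0) * C * 2 * Real.exp d, by positivity, ?_⟩
  intro L _ hL lam hl1 hl2 t ht0 ht1 m hm ξ hξ a
  have hξn : ‖ξ‖ ≤ t := by
    have htn : ‖(t:ℂ)‖ = t := by rw [Complex.norm_real, Real.norm_of_nonneg ht0]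
    rcases hξ with h | h | h
    · rw [h, htn]
    · rw [h, norm_mul, htn, norm_pow, hm]; simp
    · rw [Set.mem_singleton_iff] at h
      rw [h, norm_mul, htn, norm_pow, RCLike.norm_conj, hm]; simp
  have hinv : 0 < C₀⁻¹ := by positivity
  have hlam : 0 < lam := by linarith
  set μ := lam ^ 2 / (1 + 2 * d * lam ^ 2) with hμ
  have hμp : 0 < μ := by positivity
  have hμ1 : μ ≤ 1 := by
    rw [hμ, div_le_one (by positivity)]
    nlinarith [sq_nonneg lam]
  have hμμ0 : μ0 ≤ μ := by
    rw [hμ, hμ0]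
    apply div_le_div₀ (by positivity) _ (by positivity) _
    · exact pow_le_pow_left₀ hinv.le hl1 2
    · have := pow_le_pow_left₀ hlam.le hl2 2
      nlinarith
  set s := max t (1/2) with hs
  have hs2 : 1/2 ≤ s := le_max_right _ _
  have hst : t ≤ s := le_max_left _ _
  have hs1 : s < 1 := max_lt ht1 (by norm_num)
  have hs0 : 0 < s := by linarith
  have h1s : (1 - t) / 2 ≤ 1 - s := by
    rcases max_choice t (1/2) with h | h <;> rw [hs, h] <;> linarith
  have hsμ : 0 < s * μ := by positivity
  have hsμ1 : s * μ ≤ 1 := by nlinarith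
  have hsμ2 : μ0 / 2 ≤ s * μ := by nlinarith
  set ε := (1 - s) / (s * μ) with hε
  have hεp : 0 < ε := div_pos (by linarith) hsμ
  have hεE : ε ≤ 1 / μ0 := by
    rw [hε, div_le_div_iff₀ hsμ hμ0p]; nlinarith
  have hεl : 1 - s ≤ ε := by
    rw [hε, le_div_iff₀ hsμ]; nlinarith
  obtain ⟨f, hf0, hfs, hfb⟩ := hell L hL ε hεp hεE
  have hh0 : ∀ a, 0 ≤ (s * μ)⁻¹ * f a := fun a => mul_nonneg (by positivity) (hf0 a)
  have hth := theta_le d L lam t ht0 ht1 ξ hξn (fun a => (s * μ)⁻¹ * f a) hh0 (by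
    intro a
    refine (hfs a).trans ?_
    have h1 := SR_sum_le d L lam (fun a => (s * μ)⁻¹ * f a) hh0 a
    rw [lapl_smul, ← hμ] at h1
    have hnn : 0 ≤ ∑ b, SR d L lam a b * ((s * μ)⁻¹ * f b) :=
      Finset.sum_nonneg fun b _ => mul_nonneg (SR_nonneg _ _ _ _ _) (hh0 b)
    have h2 : t * ∑ b, SR d L lam a b * ((s * μ)⁻¹ * f b)
        ≤ s * ((s * μ)⁻¹ * f a + μ * ((s * μ)⁻¹ * lapl f a)) :=
      mul_le_mul hst h1 hnn hs0.le
    have e : ε * f a - lapl f a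
        = (s * μ)⁻¹ * f a - s * ((s * μ)⁻¹ * f a + μ * ((s * μ)⁻¹ * lapl f a)) := by
      rw [hε]; field_simp; ring
    rw [e]; linarith) a
  refine hth.trans ?_
  have hLr : (0:ℝ) < L := by exact_mod_cast Nat.pos_of_ne_zero (NeZero.ne L)
  have hex := exp_ell (L := L) t c ε ht1 hc (h1s.trans hεl) a
  have h1t : 0 < 1 - t := by linarith
  have hB : (((torusDist 0 a : ℝ) + 1) ^ (d - 2))⁻¹ + ((L:ℝ) ^ d * ε)⁻¹
      ≤ 2 * Bparam d L t (torusDist 0 a) := by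
    unfold Bparam
    have h1 : ((L:ℝ) ^ d * ε)⁻¹ ≤ 2 * ((L:ℝ) ^ d * (1 - t))⁻¹ := by
      calc ((L:ℝ) ^ d * ε)⁻¹ ≤ ((L:ℝ) ^ d * ((1 - t) / 2))⁻¹ := by
            apply inv_anti₀ (by positivity)
            exact mul_le_mul_of_nonneg_left (h1s.trans hεl) (by positivity)
        _ = _ := by field_simp
    have h2 : 0 ≤ (((torusDist 0 a : ℝ) + 1) ^ (d - 2))⁻¹ := by positivity
    linarith
  have hB0 : 0 ≤ Bparam d L t (torusDist 0 a) := by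
    unfold Bparam; positivity
  have hi : (s * μ)⁻¹ ≤ 2 / μ0 := by
    rw [show 2 / μ0 = (μ0 / 2)⁻¹ by rw [inv_div]]
    exact inv_anti₀ (by positivity) hsμ2
  calc (s * μ)⁻¹ * f a
      ≤ (2 / μ0) * (C * (2 * Bparam d L t (torusDist 0 a)) *
          (Real.exp d * Real.exp (-(min (c/2) 1) * (torusDist 0 a : ℝ) / ellT L t))) := by
        apply mul_le_mul hi _ (hf0 a) (by positivity)
        refine (hfb a).trans ?_
        apply mul_le_mul (mul_le_mul_of_nonneg_left hB hC.le) hex (Real.exp_pos _).le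
        positivity
    _ = _ := by ring
end

section
/- Strong exponential decay for short propagators (Lemma 2.19, part 5, second bound): Fix κ ∈ (0,1). There exist constants c_κ, C_κ > 0, depending only on κ, d and C₀, such that for every integer L ≥ 2, every t ∈ [0,1), every E ∈ ℝ with |E| ≤ 2 − κ, every ξ ∈ {t·m(E)², t·conj(m(E))²}, and every a ∈ ℤ_L^d: |Θ^(B)_ξ(0,a)| ≤ C_κ · exp(−c_κ·|a|). -/
open scoped Matrix.Norms.L2Operator

lemma torusDist_eq {n d : ℕ} [NeZero n] (x y : Fin d → ZMod n) :
    torusDist x y = ∑ i, (x i - y i).valMinAbs.natAbs := by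
  unfold torusDist
  refine Finset.sum_congr rfl fun i _ => ?_
  rw [ZMod.valMinAbs_natAbs_eq_min, ← neg_sub (x i) (y i), ZMod.neg_val]
  split_ifs with h
  · simp [h]
  · rfl

lemma torusDist_tri {n d : ℕ} [NeZero n] (x y z : Fin d → ZMod n) :
    torusDist x z ≤ torusDist x y + torusDist y z := by
  simp only [torusDist_eq, ← Finset.sum_add_distrib]
  refine Finset.sum_le_sum fun i _ => ?_
  have h := ZMod.natAbs_valMinAbs_add_le (x i - y i) (y i - z i)
  rw [sub_add_sub_cancel] at h
  exact h.trans (Int.natAbs_add_le _ _)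

lemma torusDist_symm {n d : ℕ} (x y : Fin d → ZMod n) :
    torusDist x y = torusDist y x := by
  unfold torusDist
  refine Finset.sum_congr rfl fun i _ => min_comm _ _

lemma torusDist_self {n d : ℕ} (x : Fin d → ZMod n) : torusDist x x = 0 := by
  simp [torusDist]

lemma nbr_of_dist_one {n d : ℕ} [NeZero n] (x y : Fin d → ZMod n) (h : torusDist x y = 1) :
    ∃ p : Fin d × Bool, x + Pi.single p.1 (if p.2 then (1 : ZMod n) else -1) = y := by
  rw [torusDist_eq] at h
  have hex : ∃ i, (x i - y i).valMinAbs.natAbs ≠ 0 := by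
    by_contra hc
    push Not at hc
    simp [hc] at h
  obtain ⟨i, hi⟩ := hex
  rw [← Finset.add_sum_erase _ _ (Finset.mem_univ i)] at h
  have h1 : (x i - y i).valMinAbs.natAbs = 1 := by omega
  have h0 : ∑ j ∈ Finset.univ.erase i, (x j - y j).valMinAbs.natAbs = 0 := by omega
  rw [Finset.sum_eq_zero_iff] at h0
  have h2 : ∀ j, j ≠ i → x j = y j := by
    intro j hj
    have := h0 j (by simp [hj])
    simpa [sub_eq_zero] using this
  have h3 : x i - y i = 1 ∨ x i - y i = -1 := by
    rw [← ZMod.coe_valMinAbs (x i - y i)]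
    rcases Int.natAbs_eq (x i - y i).valMinAbs with h | h <;> rw [h, h1] <;> simp
  have key : ∀ e : ZMod n, x i - y i = -e → x + Pi.single i e = y := by
    intro e he
    funext j
    by_cases hj : j = i
    · subst hj
      simp only [Pi.add_apply, Pi.single_eq_same]
      linear_combination he
    · simp [hj, h2 j hj]
  rcases h3 with h3 | h3
  · exact ⟨(i, false), key _ (by simp [h3])⟩
  · exact ⟨(i, true), key _ (by simp [h3])⟩

lemma nbr_card {n d : ℕ} [NeZero n] (x : Fin d → ZMod n) :
    (Finset.univ.filter fun y => torusDist x y = 1).card ≤ 2 * d := by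
  classical
  calc (Finset.univ.filter fun y => torusDist x y = 1).card
      ≤ (Finset.univ.image fun p : Fin d × Bool =>
          x + Pi.single p.1 (if p.2 then (1 : ZMod n) else -1)).card := by
        apply Finset.card_le_card
        intro y hy
        simp only [Finset.mem_filter, Finset.mem_univ, true_and] at hy
        simpa using nbr_of_dist_one x y hy
    _ ≤ (Finset.univ : Finset (Fin d × Bool)).card := Finset.card_image_le
    _ = 2 * d := by simp [mul_comm]

lemma SB_herm (d L : ℕ) [NeZero L] (lam : ℝ) : IsSelfAdjoint (SBmat d L lam) := by
  rw [IsSelfAdjoint, Matrix.star_eq_conjTranspose]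
  ext a b
  simp only [Matrix.conjTranspose_apply, SBmat, Matrix.of_apply, torusDist_symm b a, eq_comm (a := b)]
  split_ifs <;> simp

lemma SB_spec (d L : ℕ) [NeZero L] (lam : ℝ) (s : ℝ) (hs : s ∈ spectrum ℝ (SBmat d L lam)) :
    -1 + 2 / (1 + 2 * d * lam ^ 2) ≤ s ∧ s ≤ 1 := by
  have h1 : (s : ℂ) ∈ spectrum ℂ (SBmat d L lam) := by
    have := (spectrum.algebraMap_mem_iff ℂ (a := SBmat d L lam) (r := s)).2 hs
    simpa using this
  rw [← Matrix.spectrum_toLin', ← Module.End.hasEigenvalue_iff_mem_spectrum] at h1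
  obtain ⟨k, hk⟩ := eigenvalue_mem_ball h1
  have hpos : 0 < 1 + 2 * d * lam ^ 2 := by positivity
  set D := 1 + 2 * d * lam ^ 2 with hD
  have hsum : ∑ j ∈ Finset.univ.erase k, ‖SBmat d L lam k j‖ ≤ 2 * d * lam ^ 2 / D := by
    calc ∑ j ∈ Finset.univ.erase k, ‖SBmat d L lam k j‖
        = ∑ j ∈ Finset.univ.erase k, if torusDist k j = 1 then lam ^ 2 / D else 0 := by
          refine Finset.sum_congr rfl fun j hj => ?_
          have hne : k ≠ j := fun h => by simp [h] at hj
          simp only [SBmat, Matrix.of_apply, if_neg hne]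
          split_ifs
          · rw [Complex.norm_real, Real.norm_of_nonneg (by positivity)]
          · simp
      _ ≤ ∑ j, if torusDist k j = 1 then lam ^ 2 / D else 0 := by
          apply Finset.sum_le_sum_of_subset_of_nonneg (Finset.subset_univ _)
          intros; split_ifs <;> positivity
      _ = ((Finset.univ.filter fun y => torusDist k y = 1).card : ℝ) * (lam ^ 2 / D) := by
          rw [← Finset.sum_filter]; simp
      _ ≤ ((2 * d : ℕ) : ℝ) * (lam ^ 2 / D) := by
          gcongr
          exact nbr_card k
      _ = _ := by push_cast; ring
  have hdiag : SBmat d L lam k k = ((1 / D : ℝ) : ℂ) := by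
    simp [SBmat, hD]
  rw [hdiag, Metric.mem_closedBall, Complex.dist_eq, ← Complex.ofReal_sub, Complex.norm_real,
    Real.norm_eq_abs] at hk
  have h2 := abs_le.1 (hk.trans hsum)
  have h3 : 1 / D + 2 * d * lam ^ 2 / D = 1 := by
    rw [← add_div, ← hD]; exact div_self hpos.ne'
  have h4 : 2 / D = 2 * (1 / D) := by ring
  constructor <;> linarith [h2.1, h2.2]

/-- finite range matrices -/
def HasRange {d L : ℕ} [NeZero L] (X : Matrix (Fin d → ZMod L) (Fin d → ZMod L) ℂ) (R : ℕ) : Prop :=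
  ∀ a b, R < torusDist a b → X a b = 0

section range
variable {d L : ℕ} [NeZero L] {X Y : Matrix (Fin d → ZMod L) (Fin d → ZMod L) ℂ} {R R' : ℕ}

lemma HasRange.mono (h : HasRange X R) (hR : R ≤ R') : HasRange X R' :=
  fun a b hab => h a b (by omega)

lemma HasRange.add (h : HasRange X R) (h' : HasRange Y R) : HasRange (X + Y) R :=
  fun a b hab => by simp [h a b hab, h' a b hab]

lemma HasRange.sub (h : HasRange X R) (h' : HasRange Y R) : HasRange (X - Y) R :=
  fun a b hab => by simp [h a b hab, h' a b hab]

lemma HasRange.smul (c : ℂ) (h : HasRange X R) : HasRange (c • X) R :=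
  fun a b hab => by simp [h a b hab]

lemma HasRange.one : HasRange (1 : Matrix (Fin d → ZMod L) (Fin d → ZMod L) ℂ) R := by
  intro a b hab
  rw [Matrix.one_apply_ne]
  rintro rfl
  simp [torusDist_self] at hab

lemma HasRange.mul (h : HasRange X R) (h' : HasRange Y R') : HasRange (X * Y) (R + R') := by
  intro a b hab
  rw [Matrix.mul_apply]
  refine Finset.sum_eq_zero fun c _ => ?_
  have := torusDist_tri a c b
  by_cases h1 : R < torusDist a c
  · rw [h a c h1, zero_mul]
  · rw [h' c b (by omega), mul_zero]

lemma HasRange.pow (h : HasRange X R) (n : ℕ) : HasRange (X ^ n) (R * n) := by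
  induction n with
  | zero => simpa using HasRange.one
  | succ n ih => rw [pow_succ, Nat.mul_succ]; exact ih.mul h

lemma HasRange.sum (n : ℕ) (f : ℕ → Matrix (Fin d → ZMod L) (Fin d → ZMod L) ℂ)
    (h : ∀ i < n, HasRange (f i) R) : HasRange (∑ i ∈ Finset.range n, f i) R := by
  intro a b hab
  rw [Matrix.sum_apply]
  exact Finset.sum_eq_zero fun i hi => h i (Finset.mem_range.1 hi) a b hab

end range

lemma SB_range (d L : ℕ) [NeZero L] (lam : ℝ) : HasRange (SBmat d L lam) 1 := by
  intro a b hab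
  have h1 : a ≠ b := by rintro rfl; simp [torusDist_self] at hab
  simp [SBmat, h1, hab.ne']

lemma entry_le {n : Type*} [Fintype n] [DecidableEq n] (A : Matrix n n ℂ) (i j : n) :
    ‖A i j‖ ≤ ‖A‖ := by
  have h := Matrix.l2_opNorm_mulVec A (EuclideanSpace.single j (1 : ℂ))
  have h2 := PiLp.norm_apply_le
    ((EuclideanSpace.equiv n ℂ).symm (A.mulVec (EuclideanSpace.single j (1 : ℂ)).ofLp)) i
  simp at h h2
  exact h2.trans h

lemma scalar_bound {κ δ c t s : ℝ} (hκ0 : 0 < κ) (hκ1 : κ < 1) (hδ0 : 0 < δ) (hδ1 : δ ≤ 1)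
    (hc1 : -1 ≤ c) (hc2 : c ≤ 1 - κ) (ht0 : 0 ≤ t) (ht1 : t < 1)
    (hs1 : -1 + δ ≤ s) (hs2 : s ≤ 1) :
    min κ (δ ^ 2) ≤ 1 - 2 * (t * c) * s + t ^ 2 * s ^ 2 ∧
      1 - 2 * (t * c) * s + t ^ 2 * s ^ 2 ≤ 4 := by
  have e : 1 - 2 * (t * c) * s + t ^ 2 * s ^ 2 = 1 - 2 * c * (t * s) + (t * s) ^ 2 := by ring
  rw [e]
  have hr2 : t * s ≤ 1 := by nlinarith
  have hr0 : -1 ≤ t * s := by nlinarith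
  have hr1 : t * s ≤ 0 → -1 + δ ≤ t * s := by
    intro h
    rcases le_total s 0 with hs | hs
    · nlinarith
    · have : t * s = 0 := le_antisymm h (by positivity)
      linarith
  generalize t * s = r at *
  constructor
  · rcases le_total r 0 with h | h
    · refine (min_le_right _ _).trans ?_
      have := hr1 h
      nlinarith
    · refine (min_le_left _ _).trans ?_
      nlinarith [sq_nonneg (r - (1 - κ))]
  · nlinarith

lemma mSC_sq_re (E : ℝ) (hE : |E| ≤ 2) : (mSC E ^ 2).re = E ^ 2 / 2 - 1 := by
  have h : 0 ≤ 4 - E ^ 2 := by nlinarith [abs_le.1 hE]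
  have h2 := Real.sq_sqrt h
  have h3 : (mSC E).re = -E / 2 := by simp [mSC]
  have h4 : (mSC E).im = Real.sqrt (4 - E ^ 2) / 2 := by simp [mSC]
  rw [sq, Complex.mul_re, h3, h4]
  linarith

lemma mSC_normSq (E : ℝ) (hE : |E| ≤ 2) : Complex.normSq (mSC E) = 1 := by
  have h : 0 ≤ 4 - E ^ 2 := by nlinarith [abs_le.1 hE]
  have h2 := Real.sq_sqrt h
  have h3 : (mSC E).re = -E / 2 := by simp [mSC]
  have h4 : (mSC E).im = Real.sqrt (4 - E ^ 2) / 2 := by simp [mSC]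
  rw [Complex.normSq_apply, h3, h4]
  linarith

lemma core (d L : ℕ) [NeZero L] (lam κ δ c t : ℝ) (ξ : ℂ)
    (hκ0 : 0 < κ) (hκ1 : κ < 1) (hδ0 : 0 < δ) (hδ1 : δ ≤ 1)
    (hc1 : -1 ≤ c) (hc2 : c ≤ 1 - κ) (ht0 : 0 ≤ t) (ht1 : t < 1)
    (hδ : δ ≤ 2 / (1 + 2 * d * lam ^ 2))
    (hre : ξ.re = t * c) (hns : Complex.normSq ξ = t ^ 2)
    (a b : Fin d → ZMod L) :
    ‖ThetaB d L lam ξ a b‖ ≤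
      (1 - min κ (δ ^ 2) / 4) ^ (torusDist a b / 2) * (2 / min κ (δ ^ 2)) := by
  set g := min κ (δ ^ 2) with hg
  have hg0 : 0 < g := lt_min hκ0 (by positivity)
  have hg1 : g < 1 := (min_le_left _ _).trans_lt hκ1
  set S := SBmat d L lam with hS
  have hSA : IsSelfAdjoint S := SB_herm d L lam
  set A := 1 - ξ • S with hA
  set A' := 1 - (starRingEnd ℂ ξ) • S with hA'
  set M := 1 - (1 / 4 : ℂ) • (A' * A) with hM
  have hspec : ∀ s ∈ spectrum ℝ S, -1 + δ ≤ s ∧ s ≤ 1 := fun s hs => by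
    have := SB_spec d L lam s hs
    exact ⟨by linarith [this.1], this.2⟩
  have hSn : ‖S‖ ≤ 1 := by
    rw [← cfc_id ℝ S]
    refine norm_cfc_le zero_le_one fun s hs => ?_
    have := hspec s hs
    simp only [id, Real.norm_eq_abs, abs_le]
    constructor <;> linarith [this.1, this.2]
  have hξ : ‖ξ‖ ≤ 1 := by
    rw [Complex.normSq_eq_norm_sq] at hns
    nlinarith [norm_nonneg ξ]
  have hA'n : ‖A'‖ ≤ 2 := by
    calc ‖A'‖ ≤ ‖(1 : Matrix (Fin d → ZMod L) (Fin d → ZMod L) ℂ)‖ + ‖(starRingEnd ℂ ξ) • S‖ :=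
          norm_sub_le _ _
      _ ≤ 1 + 1 * 1 := by
          rw [norm_one, norm_smul, RCLike.norm_conj]
          gcongr
      _ = 2 := by norm_num
  have hMcfc : M = cfc (fun s : ℝ => Polynomial.eval s
      (1 - Polynomial.C (1 / 4 : ℝ) * (1 - Polynomial.C (2 * (t * c)) * Polynomial.X
        + Polynomial.C (t ^ 2) * Polynomial.X ^ 2))) S := by
    rw [cfc_polynomial _ S hSA]
    have e1 : starRingEnd ℂ ξ + ξ = ((2 * (t * c) : ℝ) : ℂ) := by
      rw [add_comm, Complex.add_conj, hre]
    have e2 : starRingEnd ℂ ξ * ξ = ((t ^ 2 : ℝ) : ℂ) := by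
      rw [mul_comm, Complex.mul_conj, hns]
    have e3 : A' * A = 1 - (2 * (t * c) : ℝ) • S + (t ^ 2 : ℝ) • (S * S) := by
      have : A' * A = 1 - (starRingEnd ℂ ξ + ξ) • S + (starRingEnd ℂ ξ * ξ) • (S * S) := by
        simp only [hA, hA', sub_mul, mul_sub, one_mul, mul_one, smul_mul_smul_comm, add_smul]
        abel
      rw [this, e1, e2]
      simp only [Complex.coe_smul]
    rw [hM, e3]
    simp only [map_sub, map_add, map_mul, map_one, map_pow, Polynomial.aeval_C, Polynomial.aeval_X,
      Algebra.algebraMap_eq_smul_one, smul_mul_assoc, one_mul, sq S]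
    have : (1 / 4 : ℂ) = ((1 / 4 : ℝ) : ℂ) := by norm_num
    rw [this, Complex.coe_smul]
    simp only [sq, smul_mul_assoc, one_mul, smul_smul]
  have hMn : ‖M‖ ≤ 1 - g / 4 := by
    rw [hMcfc]
    refine norm_cfc_le (by linarith) fun s hs => ?_
    have h := hspec s hs
    have h2 := scalar_bound hκ0 hκ1 hδ0 hδ1 hc1 hc2 ht0 ht1 h.1 h.2
    simp only [Polynomial.eval_sub, Polynomial.eval_add, Polynomial.eval_mul, Polynomial.eval_one,
      Polynomial.eval_C, Polynomial.eval_X, Polynomial.eval_pow, Real.norm_eq_abs, abs_le]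
    constructor <;> linarith [h2.1, h2.2]
  have hAu : IsUnit A := by
    have h1 : IsUnit (1 - M) := isUnit_one_sub_of_norm_lt_one (by linarith)
    have h2 : 1 - M = ((1 / 4 : ℂ) • A') * A := by rw [hM, smul_mul_assoc]; abel
    rw [h2, Matrix.isUnit_iff_isUnit_det, Matrix.det_mul] at h1
    rw [Matrix.isUnit_iff_isUnit_det]
    exact isUnit_of_mul_isUnit_right h1
  have hT : A * A⁻¹ = 1 := Matrix.mul_nonsing_inv _ ((Matrix.isUnit_iff_isUnit_det _).1 hAu)
  have hTheta : ThetaB d L lam ξ = A⁻¹ := rfl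
  have hid : (1 - M) * A⁻¹ = (1 / 4 : ℂ) • A' := by
    have : 1 - M = ((1 / 4 : ℂ) • A') * A := by rw [hM, smul_mul_assoc]; abel
    rw [this, mul_assoc, hT, mul_one]
  have hTn : ‖A⁻¹‖ ≤ 2 / g := by
    have h1 : A⁻¹ = (1 / 4 : ℂ) • A' + M * A⁻¹ := by
      rw [← hid, sub_mul, one_mul]; abel
    have h2 : ‖A⁻¹‖ ≤ 1 / 2 + (1 - g / 4) * ‖A⁻¹‖ := by
      calc ‖A⁻¹‖ = ‖(1 / 4 : ℂ) • A' + M * A⁻¹‖ := congrArg _ h1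
        _ ≤ ‖(1 / 4 : ℂ) • A'‖ + ‖M * A⁻¹‖ := norm_add_le _ _
        _ ≤ 1 / 4 * 2 + (1 - g / 4) * ‖A⁻¹‖ := by
          gcongr
          · rw [norm_smul]
            have : ‖(1 / 4 : ℂ)‖ = 1 / 4 := by norm_num
            rw [this]; gcongr
          · exact (norm_mul_le _ _).trans (by gcongr)
        _ = _ := by norm_num
    rw [le_div_iff₀ hg0]
    linarith
  have hSr : HasRange S 1 := SB_range d L lam
  have hA'r : HasRange A' 1 := HasRange.one.sub (hSr.smul _)
  have hAr : HasRange A 1 := HasRange.one.sub (hSr.smul _)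
  have hMr : HasRange M 2 := HasRange.one.sub ((hA'r.mul hAr).smul _)
  set N := torusDist a b / 2 with hN
  have hexp : A⁻¹ = (∑ i ∈ Finset.range N, M ^ i * ((1 / 4 : ℂ) • A')) + M ^ N * A⁻¹ := by
    rw [← Finset.sum_mul, ← hid, ← mul_assoc, geom_sum_mul_neg, sub_mul, one_mul]; abel
  have hzero : (∑ i ∈ Finset.range N, M ^ i * ((1 / 4 : ℂ) • A')) a b = 0 := by
    rcases Nat.eq_zero_or_pos N with h0 | h0
    · simp [h0]
    · refine HasRange.sum (R := 2 * (N - 1) + 1) N _ (fun i hi => ?_) a b (by omega)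
      exact ((hMr.pow i).mul (hA'r.smul _)).mono (by omega)
  have hent : A⁻¹ a b = (M ^ N * A⁻¹) a b := by
    have := congrFun (congrFun hexp a) b
    rw [Matrix.add_apply, hzero, zero_add] at this
    exact this
  rw [hTheta, hent]
  calc ‖(M ^ N * A⁻¹) a b‖ ≤ ‖M ^ N * A⁻¹‖ := entry_le _ _ _
    _ ≤ ‖M‖ ^ N * ‖A⁻¹‖ := (norm_mul_le _ _).trans (by gcongr; exact norm_pow_le _ _)
    _ ≤ _ := by
      have hq : 0 ≤ 1 - g / 4 := by linarith
      exact mul_le_mul (pow_le_pow_left₀ (norm_nonneg _) hMn N) hTn (norm_nonneg _) (pow_nonneg hq N)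

/-- **Strong exponential decay for short propagators (Lemma 2.19, part 5, second bound).**
Fix `κ ∈ (0,1)`.  There are constants `c_κ, C_κ > 0`, depending only on `κ, d, C₀`, such
that for every `L ≥ 2`, `t ∈ [0,1)`, `E ∈ ℝ` with `|E| ≤ 2 − κ`,
`ξ ∈ {t·m(E)², t·conj(m(E))²}` and `a ∈ ℤ_L^d`: `|Θ^(B)_ξ(0,a)| ≤ C_κ·exp(−c_κ·|a|)`. -/
theorem propagator_short_range_decay (d : ℕ) (hd : 3 ≤ d) (C₀ : ℝ) (hC₀ : 1 ≤ C₀)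
    (κ : ℝ) (hκ0 : 0 < κ) (hκ1 : κ < 1) :
    ∃ c : ℝ, 0 < c ∧ ∃ C : ℝ, 0 < C ∧
      ∀ (L : ℕ) [NeZero L], 2 ≤ L →
        ∀ lam : ℝ, C₀⁻¹ ≤ lam → lam ≤ C₀ →
          ∀ t : ℝ, 0 ≤ t → t < 1 →
            ∀ E : ℝ, |E| ≤ 2 - κ →
              ∀ ξ ∈ ({(t : ℂ) * mSC E ^ 2,
                       (t : ℂ) * (starRingEnd ℂ) (mSC E) ^ 2} : Set ℂ),
                ∀ a : Fin d → ZMod L,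
                  ‖ThetaB d L lam ξ 0 a‖ ≤
                    C * Real.exp (-c * (torusDist 0 a : ℝ)) := by
  have hd' : (3 : ℝ) ≤ d := by exact_mod_cast hd
  set δ : ℝ := 2 / (1 + 2 * d * C₀ ^ 2) with hδ
  have hC2 : 1 ≤ C₀ ^ 2 := by nlinarith
  have hδ0 : 0 < δ := by positivity
  have hδ1 : δ ≤ 1 := by
    rw [hδ, div_le_one (by positivity)]
    nlinarith
  set g := min κ (δ ^ 2) with hg
  have hg0 : 0 < g := lt_min hκ0 (by positivity)
  have hg1 : g < 1 := (min_le_left _ _).trans_lt hκ1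
  set q := 1 - g / 4 with hq
  have hq0 : 0 < q := by linarith
  have hq1 : q < 1 := by linarith
  have hlog : Real.log q < 0 := Real.log_neg hq0 hq1
  refine ⟨-Real.log q / 2, by linarith, q⁻¹ * (2 / g), by positivity, ?_⟩
  intro L _ hL lam hl1 hl2 t ht0 ht1 E hE ξ hξ a
  have hlam : 0 < lam := lt_of_lt_of_le (by positivity) hl1
  have hE2 : |E| ≤ 2 := by linarith
  have hEE : E ^ 2 ≤ (2 - κ) ^ 2 := by
    rw [← sq_abs]; gcongr
  have hre : ξ.re = t * (E ^ 2 / 2 - 1) ∧ Complex.normSq ξ = t ^ 2 := by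
    rcases hξ with rfl | rfl
    · rw [Complex.re_ofReal_mul, mSC_sq_re E hE2]
      simp [mSC_normSq E hE2, sq]
    · rw [Complex.re_ofReal_mul, ← map_pow, Complex.conj_re, mSC_sq_re E hE2]
      simp [mSC_normSq E hE2, sq]
  have hmain := core d L lam κ δ (E ^ 2 / 2 - 1) t ξ hκ0 hκ1 hδ0 hδ1
    (by nlinarith [sq_nonneg E]) (by nlinarith) ht0 ht1 (by rw [hδ]; gcongr) hre.1 hre.2 0 a
  refine hmain.trans ?_
  rw [← hg, ← hq, mul_right_comm]
  refine mul_le_mul_of_nonneg_right ?_ (by positivity)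
  set D := torusDist 0 a with hD
  have h1 : (D : ℝ) ≤ 2 * ((D / 2 : ℕ) : ℝ) + 2 := by
    have : D ≤ 2 * (D / 2) + 2 := by omega
    exact_mod_cast this
  have e1 : q ^ (D / 2) = Real.exp (((D / 2 : ℕ) : ℝ) * Real.log q) := by
    rw [Real.exp_nat_mul, Real.exp_log hq0]
  have e2 : q⁻¹ = Real.exp (-Real.log q) := by
    rw [Real.exp_neg, Real.exp_log hq0]
  rw [e1, e2, ← Real.exp_add, Real.exp_le_exp]
  nlinarith
end
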